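/- Let 1 ≤ p < ∞ and let φ be an analytic self-map of the unit disk D whose image closure is contained in D. Then, for the composition operator C_φ on the Hardy space H^p, the limit β(C_φ) = lim_{n→∞} [a_n(C_φ)]^{1/n} exists and β(C_φ) = e^{−1/capa(φ(D))}, where capa(φ(D)) is the Green capacity of φ(D) in D. -/

import Mathlib

/-!
Write `Ω = φ(D)` and `V = V(Ω)`, so that the claim is `aₙ ^ (1/n) → exp (-V)` for `aₙ = aₙ(C_φ)`.

If `φ` is constant, `C_φ` has rank one, so `aₙ = 0` for `n ≥ 2`, and `V = ∞`
(`greenV_singleton`). Otherwise `φ` is open, and the proof combines two estimates, both on the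
exponential scale and both insensitive to `p`.

*Upper bound* (`exists_approxNumber_le`). For a compact `K ⊆ Ω`, points maximizing the product of
mutual pseudo-hyperbolic distances (`exists_fekete`) are the zeros of finite Blaschke products which
are at most about `exp (-n V)` on `K` (`exists_small_blaschke`). The comparison of the discrete
energy with `V` is made by spreading each point over a small circle inside `Ω`
(`sq_mul_greenV_le`). With `K = φ(r D̄)` and `r` close to `1`, every point of `Ω` is very close to
`K`, and since `K` is connected, the smallness propagates from `K` to `Ω`
(`norm_le_of_small_on_connected`). Interpolating at the zeros of such a Blaschke product defines a
finite-rank operator, whose distance to `C_φ` is of the size of the product on `Ω`, because on a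
circle of radius close to `1` the product is bounded below (`half_le_norm_prod_blF`,
`norm_sub_interpolate_le`, `approxNumber_le_of_blaschke`).

*Lower bound* (`exp_le_prod_approxNumber`). Determinants `det (yᵢ (C_φ xⱼ))` are dominated by
`a₁ ⋯ aₙ` times `exp (O(n log n))` (`norm_det_le`). For `n` points of `Ω` chosen at random according to
a measure `μ` of energy less than `b` (`exists_points_energy_le`), testing on partial Blaschke
products and on point evaluations at preimages gives a triangular matrix whose determinant is the
product of the pseudo-hyperbolic distances of all pairs; hence `a₁ ⋯ aₙ` is at least
`exp (-b n² / 2)` up to a factor `exp (o(n²))`.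

The two bounds meet because `aₙ` is decreasing (`tendsto_div_of_sum_bounds`): an `aₙ` much smaller
than `exp (-n V)` would make the products over `k ≤ (1 + η) n` too small.
-/

open MeasureTheory Set Filter
open scoped ENNReal NNReal

noncomputable section

/-- The open unit disk in the complex plane. -/
def unitDisk : Set ℂ := {z : ℂ | ‖z‖ < 1}

/-- The Green function of the unit disk, `g(z,w) = log |(1 - w̄ z)/(z - w)|`,
with value `⊤` on the diagonal. -/
def greenFnE (z w : ℂ) : ℝ≥0∞ :=
  if z = w then ⊤ else ENNReal.ofReal (Real.log ‖(1 - (starRingEnd ℂ) w * z) / (z - w)‖)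

/-- The Green energy `I(μ) = ∬ g(z,w) dμ(z) dμ(w)` of a measure. -/
def greenEnergy (μ : Measure ℂ) : ℝ≥0∞ := ∫⁻ z, ∫⁻ w, greenFnE z w ∂μ ∂μ

/-- `greenV E = V(E)`: the infimum of energies of probability measures supported by a
compact subset of `E`. -/
def greenV (E : Set ℂ) : ℝ≥0∞ :=
  ⨅ (μ : Measure ℂ) (_ : IsProbabilityMeasure μ)
    (_ : ∃ K : Set ℂ, K ⊆ E ∧ IsCompact K ∧ μ Kᶜ = 0), greenEnergy μ

/-- The Green capacity `capa(E) = 1/V(E)` of `E` in the unit disk. -/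
def greenCapa (E : Set ℂ) : ℝ≥0∞ := (greenV E)⁻¹

/-- `e^{-1/capa(E)} = e^{-V(E)}`, with the value `0` when `V(E) = ∞` (i.e. `capa(E) = 0`). -/
def expNegV (E : Set ℂ) : ℝ :=
  if greenV E = ⊤ then 0 else Real.exp (-(greenV E).toReal)

/-- The pseudo-hyperbolic distance on the unit disk. -/
def pseudoDist (z w : ℂ) : ℝ := ‖(z - w) / (1 - (starRingEnd ℂ) z * w)‖

/-- The pseudo-hyperbolic diameter of a set. -/
def pseudoDiam (E : Set ℂ) : ℝ :=
  sSup {d : ℝ | ∃ z ∈ E, ∃ w ∈ E, d = pseudoDist z w}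

/-- The `n`-th approximation number `a_n(T) = inf {‖T - R‖ : rank R < n}`. -/
def approxNumber {E F : Type*} [NormedAddCommGroup E] [NormedAddCommGroup F]
    [NormedSpace ℂ E] [NormedSpace ℂ F] (T : E →L[ℂ] F) (n : ℕ) : ℝ :=
  sInf {c : ℝ | ∃ R : E →L[ℂ] F,
    Module.rank ℂ (LinearMap.range (R : E →ₗ[ℂ] F)) < (n : Cardinal) ∧ c = ‖T - R‖}

/-- The squared norm `‖f‖² = |f(0)|² + ∫_D |f'|² ω dA` (normalized area measure) of the
weighted analytic Hilbert space `H_ω`. -/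
def hwNormSq (ω : ℝ → ℝ) (f : ℂ → ℂ) : ℝ :=
  ‖f 0‖ ^ 2 + (∫ z in unitDisk, ‖deriv f z‖ ^ 2 * ω ‖z‖) / Real.pi

/-- Membership in the weighted analytic Hilbert space `H_ω`. -/
def memHw (ω : ℝ → ℝ) (f : ℂ → ℂ) : Prop :=
  DifferentiableOn ℂ f unitDisk ∧
    IntegrableOn (fun z => ‖deriv f z‖ ^ 2 * ω ‖z‖) unitDisk

/-- The coefficient weights `w_0 = 1`, `w_n = 2 n² ∫_0^1 r^{2n-1} ω(r) dr`. -/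
def wcoef (ω : ℝ → ℝ) (n : ℕ) : ℝ :=
  if n = 0 then 1 else 2 * (n : ℝ) ^ 2 * ∫ r in (0:ℝ)..1, r ^ (2 * n - 1) * ω r

/-- Taylor coefficient of `f` at `0`. -/
def taylorCoeff (f : ℂ → ℂ) (n : ℕ) : ℂ := iteratedDeriv n f 0 / (n.factorial : ℂ)

/-- `(1/2π) ∫_0^{2π} |f(r e^{it})|^p dt`. -/
def hpMean (p : ℝ) (f : ℂ → ℂ) (r : ℝ) : ℝ :=
  (1 / (2 * Real.pi)) *
    ∫ t in (0:ℝ)..(2 * Real.pi), ‖f ((r : ℂ) * Complex.exp ((t : ℂ) * Complex.I))‖ ^ p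

/-- The `H^p` norm. -/
def hpNorm (p : ℝ) (f : ℂ → ℂ) : ℝ :=
  sSup {m : ℝ | ∃ r ∈ Set.Ioo (0:ℝ) 1, m = hpMean p f r ^ (1 / p)}

/-- Membership in the Hardy space `H^p`. -/
def memHp (p : ℝ) (f : ℂ → ℂ) : Prop :=
  DifferentiableOn ℂ f unitDisk ∧
    BddAbove {m : ℝ | ∃ r ∈ Set.Ioo (0:ℝ) 1, m = hpMean p f r ^ (1 / p)}

/-- The squared `H²` norm `‖f‖² = Σ |b_n|²` in terms of Taylor coefficients. -/
def h2NormSq (f : ℂ → ℂ) : ℝ := ∑' n : ℕ, ‖taylorCoeff f n‖ ^ 2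

/-- Membership in the Hardy space `H²`. -/
def memH2 (f : ℂ → ℂ) : Prop :=
  DifferentiableOn ℂ f unitDisk ∧ Summable (fun n : ℕ => ‖taylorCoeff f n‖ ^ 2)

/-- The `n`-th Kolmogorov number. -/
def kolmogorovNumber {E F : Type*} [NormedAddCommGroup E] [NormedAddCommGroup F]
    [NormedSpace ℂ E] [NormedSpace ℂ F] (T : E →L[ℂ] F) (n : ℕ) : ℝ :=
  ⨅ (S : Submodule ℂ F) (_ : Module.rank ℂ S < (n : Cardinal)),
    ⨆ x : {x : E // ‖x‖ ≤ 1}, Metric.infDist (T (x : E)) (S : Set F)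

/-- The `n`-th Gelfand number: infimum of norms of restrictions of `T` to closed
subspaces of codimension `< n`. -/
def gelfandNumber {X : Type*} [NormedAddCommGroup X] [NormedSpace ℂ X]
    (T : X →L[ℂ] X) (n : ℕ) : ℝ :=
  ⨅ (F : Submodule ℂ X) (_ : IsClosed (F : Set X))
    (_ : Module.rank ℂ (X ⧸ F) < (n : Cardinal)),
    ⨆ x : {x : X // x ∈ F ∧ ‖x‖ ≤ 1}, ‖T (x : X)‖

/-- `ε_n(T) = inf_{dim E < n} sup_{x ∈ B_X} dist (T x, T(E))`. -/
def epsApprox {X : Type*} [NormedAddCommGroup X] [NormedSpace ℂ X]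
    (T : X →L[ℂ] X) (n : ℕ) : ℝ :=
  ⨅ (E : Submodule ℂ X) (_ : Module.rank ℂ E < (n : Cardinal)),
    ⨆ x : {x : X // ‖x‖ ≤ 1}, Metric.infDist (T (x : X)) (T '' (E : Set X))


/-! ### Point evaluations and bounded functions in Hardy spaces -/

lemma isOpen_unitDisk : IsOpen unitDisk := isOpen_lt continuous_norm continuous_const

lemma unitDisk_eq_ball : unitDisk = Metric.ball (0 : ℂ) 1 := by
  ext z; simp [unitDisk]

lemma norm_circle_point (r t : ℝ) (hr : 0 ≤ r) :
    ‖(r : ℂ) * Complex.exp ((t : ℂ) * Complex.I)‖ = r := by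
  rw [norm_mul, Complex.norm_exp_ofReal_mul_I, Complex.norm_real, Real.norm_of_nonneg hr, mul_one]

lemma continuous_on_circle {f : ℂ → ℂ} (hf : DifferentiableOn ℂ f unitDisk) {r : ℝ}
    (hr : r ∈ Ioo (0 : ℝ) 1) :
    Continuous (fun t : ℝ => f ((r : ℂ) * Complex.exp ((t : ℂ) * Complex.I))) := by
  refine hf.continuousOn.comp_continuous (by fun_prop) fun t => ?_
  change ‖_‖ < (1 : ℝ)
  rw [norm_circle_point r t hr.1.le]
  exact hr.2

/-- `L¹` means over circles are dominated by `L^p` means (Jensen's inequality). -/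
lemma mean_norm_le_hpMean {p : ℝ} (hp : 1 ≤ p) {f : ℂ → ℂ} (hf : DifferentiableOn ℂ f unitDisk)
    {r : ℝ} (hr : r ∈ Ioo (0 : ℝ) 1) :
    (1 / (2 * Real.pi)) *
      ∫ t in (0:ℝ)..(2 * Real.pi), ‖f ((r : ℂ) * Complex.exp ((t : ℂ) * Complex.I))‖
      ≤ hpMean p f r ^ (1 / p) := by
  have hp0 : 0 < p := by linarith
  have hc := continuous_on_circle hf hr
  have hpi := Real.two_pi_pos
  set u : ℝ → ℝ := fun t => ‖f ((r : ℂ) * Complex.exp ((t : ℂ) * Complex.I))‖ with hu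
  have huc : Continuous u := hc.norm
  have hupc : Continuous (fun t => u t ^ p) := huc.rpow_const (fun _ => Or.inr hp0.le)
  have key := (convexOn_rpow hp).map_set_average_le (μ := (volume : Measure ℝ))
    (t := Ioc 0 (2 * Real.pi)) (f := u)
    (continuousOn_id.rpow_const (fun _ _ => Or.inr hp0.le)) isClosed_Ici
    (by simp [Real.pi_pos]) (by rw [Real.volume_Ioc]; exact ENNReal.ofReal_ne_top)
    (Eventually.of_forall fun t => norm_nonneg _)
    (huc.integrableOn_Ioc) (hupc.integrableOn_Ioc)
  rw [setAverage_eq, setAverage_eq, ← intervalIntegral.integral_of_le hpi.le] at key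
  rw [← intervalIntegral.integral_of_le hpi.le] at key
  simp only [Real.volume_real_Ioc_of_le hpi.le, sub_zero, smul_eq_mul] at key
  unfold hpMean
  rw [one_div (2 * Real.pi)]
  have h0 : 0 ≤ (2 * Real.pi)⁻¹ * ∫ t in (0:ℝ)..(2 * Real.pi), u t :=
    mul_nonneg (by positivity)
      (intervalIntegral.integral_nonneg hpi.le fun t _ => norm_nonneg _)
  calc _ = (((2 * Real.pi)⁻¹ * ∫ t in (0:ℝ)..(2 * Real.pi), u t) ^ p) ^ (1 / p) := by
        rw [← Real.rpow_mul h0, mul_one_div_cancel hp0.ne', Real.rpow_one]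
    _ ≤ _ := Real.rpow_le_rpow (Real.rpow_nonneg h0 _) key (by positivity)

/-- Point evaluations are bounded on `H^p`, with a bound which blows up only polynomially
at the boundary. -/
lemma norm_le_of_memHp {p : ℝ} (hp : 1 ≤ p) {f : ℂ → ℂ} (hf : memHp p f) {ζ : ℂ}
    (hζ : ‖ζ‖ < 1) : ‖f ζ‖ ≤ 2 / (1 - ‖ζ‖) * hpNorm p f := by
  obtain ⟨hd, hb⟩ := hf
  set r : ℝ := (1 + ‖ζ‖) / 2 with hrdef
  have hn := norm_nonneg ζ
  have hr : r ∈ Ioo (0 : ℝ) 1 := ⟨by positivity, by rw [hrdef]; linarith⟩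
  have hrz : ‖ζ‖ < r := by rw [hrdef]; linarith
  have hsub : Metric.closedBall (0 : ℂ) r ⊆ unitDisk := by
    intro z hz
    simp only [Metric.mem_closedBall, dist_zero_right] at hz
    exact lt_of_le_of_lt hz hr.2
  have hcauchy := Complex.circleIntegral_sub_inv_smul_of_differentiable_on_off_countable
    (c := 0) (R := r) (w := ζ) (f := f) Set.countable_empty (by simpa using hrz)
    (hd.continuousOn.mono hsub)
    (fun x hx => hd.differentiableAt
      (isOpen_unitDisk.mem_nhds (hsub (Metric.ball_subset_closedBall hx.1))))
  have hM := mean_norm_le_hpMean hp hd hr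
  have hle : hpMean p f r ^ (1 / p) ≤ hpNorm p f := le_csSup hb ⟨r, hr, rfl⟩
  have hpi := Real.two_pi_pos
  have hc := continuous_on_circle hd hr
  have h1 : ‖∮ z in C(0, r), (z - ζ)⁻¹ • f z‖ ≤
      ∫ t in (0:ℝ)..(2 * Real.pi), (2 / (1 - ‖ζ‖)) *
        ‖f ((r : ℂ) * Complex.exp ((t : ℂ) * Complex.I))‖ := by
    unfold circleIntegral
    refine intervalIntegral.norm_integral_le_of_norm_le hpi.le ?_
      ((hc.norm.const_mul _).intervalIntegrable _ _)
    refine Eventually.of_forall fun t _ => ?_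
    have hcm : circleMap 0 r t = (r : ℂ) * Complex.exp ((t : ℂ) * Complex.I) := by
      simp [circleMap]
    rw [norm_smul, norm_smul, ← mul_assoc, hcm]
    refine mul_le_mul_of_nonneg_right ?_ (norm_nonneg _)
    rw [deriv_circleMap, norm_mul, norm_circleMap_zero, Complex.norm_I, mul_one, norm_inv,
      abs_of_pos hr.1]
    have h2 : (1 - ‖ζ‖) / 2 ≤ ‖(r : ℂ) * Complex.exp ((t : ℂ) * Complex.I) - ζ‖ := by
      have := norm_sub_norm_le ((r : ℂ) * Complex.exp ((t : ℂ) * Complex.I)) ζ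
      rw [norm_circle_point r t hr.1.le] at this
      rw [hrdef] at this ⊢
      linarith
    have h3 : (0:ℝ) < (1 - ‖ζ‖) / 2 := by linarith
    calc _ ≤ 1 * ((1 - ‖ζ‖) / 2)⁻¹ := by
          gcongr
          exact hr.2.le
      _ = _ := by rw [one_mul, inv_div]
  rw [hcauchy, intervalIntegral.integral_const_mul, norm_smul] at h1
  have h4 : ‖(2 * (Real.pi : ℂ) * Complex.I)‖ = 2 * Real.pi := by
    simp [abs_of_pos Real.pi_pos]
  rw [h4] at h1
  have h5 : (0:ℝ) ≤ 2 / (1 - ‖ζ‖) := div_nonneg (by norm_num) (by linarith)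
  calc ‖f ζ‖ = (1 / (2 * Real.pi)) * (2 * Real.pi * ‖f ζ‖) := by field_simp
    _ ≤ (1 / (2 * Real.pi)) * _ := mul_le_mul_of_nonneg_left h1 (by positivity)
    _ = (2 / (1 - ‖ζ‖)) * ((1 / (2 * Real.pi)) * ∫ t in (0:ℝ)..(2 * Real.pi),
        ‖f ((r : ℂ) * Complex.exp ((t : ℂ) * Complex.I))‖) := by ring
    _ ≤ _ := mul_le_mul_of_nonneg_left (hM.trans hle) h5

lemma hpMean_rpow_le {p : ℝ} (hp : 1 ≤ p) {f : ℂ → ℂ} (hf : DifferentiableOn ℂ f unitDisk)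
    {M : ℝ} (hM : ∀ z ∈ unitDisk, ‖f z‖ ≤ M) {r : ℝ} (hr : r ∈ Ioo (0 : ℝ) 1) :
    hpMean p f r ^ (1 / p) ≤ M := by
  have hp0 : 0 < p := by linarith
  have hpi := Real.two_pi_pos
  have hM0 : 0 ≤ M := (norm_nonneg _).trans (hM 0 (by simp [unitDisk]))
  have hc := continuous_on_circle hf hr
  have h1 : hpMean p f r ≤ M ^ p := by
    unfold hpMean
    calc _ ≤ (1 / (2 * Real.pi)) * ∫ t in (0:ℝ)..(2 * Real.pi), M ^ p := by
          refine mul_le_mul_of_nonneg_left ?_ (by positivity)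
          refine intervalIntegral.integral_mono_on hpi.le ?_ (by simp) fun t _ => ?_
          · exact (hc.norm.rpow_const (fun _ => Or.inr hp0.le)).intervalIntegrable _ _
          · refine Real.rpow_le_rpow (norm_nonneg _) (hM _ ?_) hp0.le
            change ‖_‖ < (1 : ℝ)
            rw [norm_circle_point r t hr.1.le]
            exact hr.2
      _ = M ^ p := by simp; field_simp
  have h0 : 0 ≤ hpMean p f r := by
    unfold hpMean
    exact mul_nonneg (by positivity) (intervalIntegral.integral_nonneg hpi.le
      fun t _ => Real.rpow_nonneg (norm_nonneg _) _)
  calc _ ≤ (M ^ p) ^ (1 / p) := Real.rpow_le_rpow h0 h1 (by positivity)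
    _ = M := by rw [← Real.rpow_mul hM0, mul_one_div_cancel hp0.ne', Real.rpow_one]

lemma memHp_of_bounded {p : ℝ} (hp : 1 ≤ p) {f : ℂ → ℂ} (hf : DifferentiableOn ℂ f unitDisk)
    {M : ℝ} (hM : ∀ z ∈ unitDisk, ‖f z‖ ≤ M) : memHp p f :=
  ⟨hf, M, by rintro _ ⟨r, hr, rfl⟩; exact hpMean_rpow_le hp hf hM hr⟩

lemma hpNorm_le_of_bounded {p : ℝ} (hp : 1 ≤ p) {f : ℂ → ℂ} (hf : DifferentiableOn ℂ f unitDisk)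
    {M : ℝ} (hM : ∀ z ∈ unitDisk, ‖f z‖ ≤ M) : hpNorm p f ≤ M :=
  csSup_le ⟨_, 1 / 2, by norm_num, rfl⟩
    (by rintro _ ⟨r, hr, rfl⟩; exact hpMean_rpow_le hp hf hM hr)

/-! ### Approximation numbers and determinants -/

section approx
variable {E F : Type*} [NormedAddCommGroup E] [NormedAddCommGroup F]
    [NormedSpace ℂ E] [NormedSpace ℂ F]

lemma approxNumber_le (T R : E →L[ℂ] F) (n : ℕ)
    (h : Module.rank ℂ (LinearMap.range (R : E →ₗ[ℂ] F)) < (n : Cardinal)) :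
    approxNumber T n ≤ ‖T - R‖ :=
  csInf_le ⟨0, by rintro _ ⟨R, -, rfl⟩; exact norm_nonneg _⟩ ⟨R, h, rfl⟩

lemma approxNumber_nonneg (T : E →L[ℂ] F) (n : ℕ) : 0 ≤ approxNumber T n :=
  Real.sInf_nonneg (by rintro _ ⟨R, -, rfl⟩; exact norm_nonneg _)

lemma approxNumber_set_nonempty (T : E →L[ℂ] F) {n : ℕ} (hn : 1 ≤ n) :
    {c : ℝ | ∃ R : E →L[ℂ] F,
    Module.rank ℂ (LinearMap.range (R : E →ₗ[ℂ] F)) < (n : Cardinal) ∧ c = ‖T - R‖}.Nonempty := by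
  refine ⟨_, 0, ?_, rfl⟩
  rw [ContinuousLinearMap.toLinearMap_zero, LinearMap.range_zero, rank_bot]
  exact_mod_cast hn

lemma approxNumber_anti (T : E →L[ℂ] F) {m n : ℕ} (hm : 1 ≤ m) (hmn : m ≤ n) :
    approxNumber T n ≤ approxNumber T m := by
  refine le_csInf (approxNumber_set_nonempty T hm) ?_
  rintro _ ⟨R, hR, rfl⟩
  exact approxNumber_le T R n (hR.trans_le (by exact_mod_cast hmn))

lemma exists_of_approxNumber_lt (T : E →L[ℂ] F) {n : ℕ} (hn : 1 ≤ n) {c : ℝ}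
    (h : approxNumber T n < c) : ∃ R : E →L[ℂ] F,
    Module.rank ℂ (LinearMap.range (R : E →ₗ[ℂ] F)) < (n : Cardinal) ∧ ‖T - R‖ < c := by
  obtain ⟨_, ⟨R, hR, rfl⟩, h2⟩ := exists_lt_of_csInf_lt (approxNumber_set_nonempty T hn) h
  exact ⟨R, hR, h2⟩

end approx

/-- Subspaces `N 0, N 1, …` with `dim N j > j` contain an orthonormal system `u j ∈ N j`:
each `u j` is taken in `N j` orthogonally to its predecessors. -/
lemma exists_orthonormal_mem {V : Type*} [NormedAddCommGroup V] [InnerProductSpace ℂ V]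
    [FiniteDimensional ℂ V] (N : ℕ → Submodule ℂ V) (m : ℕ)
    (hN : ∀ j < m, j < Module.finrank ℂ (N j)) :
    ∃ u : Fin m → V, Orthonormal ℂ u ∧ ∀ j : Fin m, u j ∈ N j := by
  induction m with
  | zero => exact ⟨Fin.elim0, ⟨fun i => i.elim0, fun i => i.elim0⟩, fun j => j.elim0⟩
  | succ m ih =>
    obtain ⟨u, hu, huN⟩ := ih fun j hj => hN j (hj.trans (Nat.lt_succ_self m))
    set W := Submodule.span ℂ (Set.range u) with hW
    have hWdim : Module.finrank ℂ W ≤ m := by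
      have := finrank_range_le_card (R := ℂ) u
      rwa [Fintype.card_fin] at this
    have h1 := Submodule.finrank_add_finrank_orthogonal W
    have h2 := Submodule.finrank_sup_add_finrank_inf_eq (N m) Wᗮ
    have h3 := Submodule.finrank_le (N m ⊔ Wᗮ)
    have h4 := hN m (Nat.lt_succ_self m)
    have h5 : 0 < Module.finrank ℂ (N m ⊓ Wᗮ : Submodule ℂ V) := by omega
    have : Nontrivial (N m ⊓ Wᗮ : Submodule ℂ V) := Module.finrank_pos_iff.mp h5
    obtain ⟨⟨v, hv⟩, hv0⟩ := exists_ne (0 : (N m ⊓ Wᗮ : Submodule ℂ V))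
    have hv0' : v ≠ 0 := fun h => hv0 (Subtype.ext h)
    have hvn : ‖v‖ ≠ 0 := norm_ne_zero_iff.mpr hv0'
    set w : V := ((‖v‖⁻¹ : ℝ) : ℂ) • v with hw
    have hwN : w ∈ N m := (N m).smul_mem _ hv.1
    have hwW : w ∈ Wᗮ := Wᗮ.smul_mem _ hv.2
    have hw1 : ‖w‖ = 1 := by
      rw [hw, norm_smul, Complex.norm_real, norm_inv, norm_norm, inv_mul_cancel₀ hvn]
    have hin : ∀ i, inner ℂ (u i) w = 0 := fun i =>
      (Submodule.mem_orthogonal W w).mp hwW _ (Submodule.subset_span ⟨i, rfl⟩)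
    refine ⟨Fin.snoc u w, ⟨fun i => ?_, fun i j hij => ?_⟩, fun j => ?_⟩
    · refine Fin.lastCases ?_ (fun i => ?_) i
      · simpa using hw1
      · simpa using hu.1 i
    · revert hij
      refine Fin.lastCases ?_ (fun i => ?_) i <;> refine Fin.lastCases ?_ (fun j => ?_) j
      · intro h; exact absurd rfl h
      · intro _
        simp only [Fin.snoc_last, Fin.snoc_castSucc]
        rw [inner_eq_zero_symm]; exact hin j
      · intro _
        simpa using hin i
      · intro h
        simp only [Fin.snoc_castSucc]
        exact hu.2 fun h' => h (by rw [h'])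
    · refine Fin.lastCases ?_ (fun j => ?_) j
      · simpa using hwN
      · simpa using huN j

lemma norm_det_le_of_col {n : ℕ} (A : Matrix (Fin n) (Fin n) ℂ) (c : Fin n → ℝ)
    (h : ∀ i j, ‖A i j‖ ≤ c j) : ‖A.det‖ ≤ n.factorial * ∏ j, c j := by
  rw [Matrix.det_apply]
  refine (norm_sum_le _ _).trans ?_
  have : ∀ σ ∈ (Finset.univ : Finset (Equiv.Perm (Fin n))),
      ‖Equiv.Perm.sign σ • ∏ i, A (σ i) i‖ ≤ ∏ j, c j := by
    intro σ _
    have h1 : ‖Equiv.Perm.sign σ • ∏ i, A (σ i) i‖ = ‖∏ i, A (σ i) i‖ := by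
      rcases Int.units_eq_one_or (Equiv.Perm.sign σ) with h | h <;> simp [h]
    rw [h1, norm_prod]
    exact Finset.prod_le_prod (fun _ _ => norm_nonneg _) fun i _ => h _ _
  refine (Finset.sum_le_sum this).trans ?_
  simp [Fintype.card_perm]

lemma norm_det_eq_one_of_orthonormal {n : ℕ} (u : Fin n → EuclideanSpace ℂ (Fin n))
    (hu : Orthonormal ℂ u) : ‖(Matrix.of fun i l => u l i).det‖ = 1 := by
  set U : Matrix (Fin n) (Fin n) ℂ := Matrix.of fun i l => u l i with hU
  have h1 : U.conjTranspose * U = 1 := by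
    ext k l
    have := (orthonormal_iff_ite.mp hu) k l
    rw [Matrix.mul_apply, Matrix.one_apply, ← this, PiLp.inner_apply]
    refine Finset.sum_congr rfl fun i _ => ?_
    simp [hU, Matrix.conjTranspose_apply, mul_comm]
  have h2 := congrArg Matrix.det h1
  rw [Matrix.det_mul, Matrix.det_conjTranspose, Matrix.det_one] at h2
  have h3 := congrArg norm h2
  rw [norm_mul, norm_star, norm_one] at h3
  nlinarith [norm_nonneg U.det]

section det
variable {X : Type*} [NormedAddCommGroup X] [NormedSpace ℂ X]

/-- Choose `R k` of rank at most `k` with `‖T - R k‖ < α k`. The kernels of `v ↦ R k (∑ vᵢ xᵢ)`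
provide an orthonormal basis of `ℂⁿ` whose `k`-th vector is mapped by `T` to something of size
`O(α k)`; passing to that basis does not change the modulus of the determinant. -/
lemma norm_det_le_of_lt (T : X →L[ℂ] X) {n : ℕ} (x : Fin n → X) (y : Fin n → X →ₗ[ℂ] ℂ)
    {a b : ℝ} (hb : 0 ≤ b) (hx : ∀ i, ‖x i‖ ≤ a) (hy : ∀ i v, ‖y i v‖ ≤ b * ‖v‖)
    (α : Fin n → ℝ) (hα : ∀ k : Fin n, approxNumber T (k + 1) < α k) :
    ‖(Matrix.of fun i j => y i (T (x j))).det‖ ≤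
      n.factorial * ∏ k : Fin n, (b * (α k * (n * a))) := by
  have hR : ∀ k : Fin n, ∃ R : X →L[ℂ] X,
      Module.rank ℂ (LinearMap.range (R : X →ₗ[ℂ] X)) < ((k + 1 : ℕ) : Cardinal) ∧
        ‖T - R‖ < α k := fun k => exists_of_approxNumber_lt T (by omega) (hα k)
  choose R hRr hRn using hR
  let S : EuclideanSpace ℂ (Fin n) →ₗ[ℂ] X :=
    { toFun := fun v => ∑ i, v i • x i
      map_add' := fun v w => by simp [add_smul, Finset.sum_add_distrib]
      map_smul' := fun c v => by simp [mul_smul, Finset.smul_sum] }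
  have hS : ∀ v, S v = ∑ i, v i • x i := fun v => rfl
  -- reversed indexing, so that the `j`-th kernel has dimension at least `j + 1`
  let N : ℕ → Submodule ℂ (EuclideanSpace ℂ (Fin n)) := fun j =>
    if h : j < n then LinearMap.ker ((R (Fin.rev ⟨j, h⟩) : X →ₗ[ℂ] X) ∘ₗ S) else ⊤
  have hN : ∀ j < n, j < Module.finrank ℂ (N j) := by
    intro j hj
    have hNj : N j = LinearMap.ker ((R (Fin.rev ⟨j, hj⟩) : X →ₗ[ℂ] X) ∘ₗ S) := dif_pos hj
    rw [hNj]
    set k := Fin.rev ⟨j, hj⟩ with hk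
    have h1 := LinearMap.finrank_range_add_finrank_ker ((R k : X →ₗ[ℂ] X) ∘ₗ S)
    rw [finrank_euclideanSpace_fin] at h1
    have h2 : Module.finrank ℂ (LinearMap.range ((R k : X →ₗ[ℂ] X) ∘ₗ S)) ≤ k := by
      have h3 : Module.rank ℂ (LinearMap.range ((R k : X →ₗ[ℂ] X) ∘ₗ S)) <
          ((k + 1 : ℕ) : Cardinal) :=
        (Submodule.rank_mono (LinearMap.range_comp_le_range _ _)).trans_lt (hRr k)
      rw [← Module.finrank_eq_rank] at h3
      have : Module.finrank ℂ (LinearMap.range ((R k : X →ₗ[ℂ] X) ∘ₗ S)) < k + 1 := by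
        exact_mod_cast h3
      omega
    have hk2 : (k : ℕ) = n - (j + 1) := by rw [hk, Fin.val_rev]
    omega
  obtain ⟨u', hu', huN'⟩ := exists_orthonormal_mem N n hN
  set u : Fin n → EuclideanSpace ℂ (Fin n) := fun k => u' (Fin.rev k) with hu_def
  have hu : Orthonormal ℂ u := hu'.comp _ Fin.rev_injective
  have huker : ∀ k, R k (S (u k)) = 0 := by
    intro k
    have h1 := huN' (Fin.rev k)
    have h2 : ((Fin.rev k : Fin n) : ℕ) < n := (Fin.rev k).2
    simp only [N, h2, dif_pos, Fin.eta, Fin.rev_rev, LinearMap.mem_ker] at h1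
    exact h1
  have hprod : (Matrix.of fun i j => y i (T (x j))) * (Matrix.of fun i l => u l i) =
      Matrix.of fun i l => y i ((T - R l) (S (u l))) := by
    ext i l
    simp only [Matrix.mul_apply, Matrix.of_apply, sub_apply, huker, sub_zero]
    rw [hS, map_sum, map_sum]
    refine Finset.sum_congr rfl fun j _ => ?_
    rw [map_smul, map_smul, smul_eq_mul, mul_comm]
  have hdet : ‖(Matrix.of fun i j => y i (T (x j))).det‖ =
      ‖(Matrix.of fun i l => y i ((T - R l) (S (u l)))).det‖ := by
    rw [← hprod, Matrix.det_mul, norm_mul, norm_det_eq_one_of_orthonormal u hu, mul_one]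
  rw [hdet]
  refine norm_det_le_of_col _ _ fun i l => ?_
  rw [Matrix.of_apply]
  have hSu : ‖S (u l)‖ ≤ n * a := by
    rw [hS]
    refine (norm_sum_le _ _).trans ?_
    calc _ ≤ ∑ _i : Fin n, a := by
          refine Finset.sum_le_sum fun j _ => ?_
          rw [norm_smul]
          have h1 : ‖u l j‖ ≤ 1 := (PiLp.norm_apply_le (u l) j).trans (hu.1 l).le
          calc _ ≤ 1 * a := mul_le_mul h1 (hx j) (norm_nonneg _) zero_le_one
            _ = a := one_mul a
      _ = n * a := by simp
  have hα0 : 0 ≤ α l := (approxNumber_nonneg T _).trans (hα l).le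
  calc _ ≤ b * ‖(T - R l) (S (u l))‖ := hy _ _
    _ ≤ b * (α l * (n * a)) := by
        refine mul_le_mul_of_nonneg_left ?_ hb
        exact ((T - R l).le_opNorm _).trans (mul_le_mul (hRn l).le hSu (norm_nonneg _) hα0)

/-- Approximation numbers dominate determinants: for bounded families of vectors and of
functionals, `|det (y i (T (x j)))|` is at most `∏ a_k(T)` up to a factor `e^{O(n log n)}`. -/
lemma norm_det_le (T : X →L[ℂ] X) {n : ℕ} (x : Fin n → X) (y : Fin n → X →ₗ[ℂ] ℂ)
    {a b : ℝ} (hb : 0 ≤ b) (hx : ∀ i, ‖x i‖ ≤ a) (hy : ∀ i v, ‖y i v‖ ≤ b * ‖v‖) :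
    ‖(Matrix.of fun i j => y i (T (x j))).det‖ ≤
      n.factorial * ∏ k : Fin n, (b * (approxNumber T (k + 1) * (n * a))) := by
  have hlim : Tendsto (fun η : ℝ => (n.factorial : ℝ) *
      ∏ k : Fin n, (b * ((approxNumber T (k + 1) + η) * (n * a)))) (nhdsWithin 0 (Ioi 0))
      (nhds (n.factorial * ∏ k : Fin n, (b * ((approxNumber T (k + 1) + 0) * (n * a))))) :=
    (Continuous.tendsto (by fun_prop) 0).mono_left nhdsWithin_le_nhds
  simp only [add_zero] at hlim
  refine ge_of_tendsto hlim ?_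
  filter_upwards [self_mem_nhdsWithin] with η hη
  exact norm_det_le_of_lt T x y hb hx hy _ fun k => lt_add_of_pos_right _ hη

end det

/-! ### Hermite interpolation -/

/-- Hermite's remainder formula, as an estimate: for distinct nodes `v i` in a disc, the error
of Lagrange interpolation of `F` at `z` is `∏ (z - v i)` times the Cauchy integral of
`F(ζ) / (∏ (ζ - v i) (ζ - z))` over the boundary circle. -/
lemma norm_sub_interpolate_le {ι : Type*} [DecidableEq ι] {s : Finset ι} (hs : s.Nonempty)
    {v : ι → ℂ} (hv : Set.InjOn v s) {F : ℂ → ℂ} {U : Set ℂ} (hU : IsOpen U)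
    (hF : DifferentiableOn ℂ F U) {c : ℂ} {R : ℝ} (hR : 0 < R) (hcU : Metric.closedBall c R ⊆ U)
    (hvR : ∀ i ∈ s, v i ∈ Metric.ball c R) {z : ℂ} {d A : ℝ} (hd : 0 < d)
    (hz : dist z c + d ≤ R)
    (hA : ∀ ζ ∈ Metric.sphere c R, ‖F ζ‖ ≤ A * ∏ i ∈ s, ‖ζ - v i‖) :
    ‖F z - Polynomial.eval z (Lagrange.interpolate s v fun i => F (v i))‖ ≤
      (∏ i ∈ s, ‖z - v i‖) * (R * A / d) := by
  have hzR : z ∈ Metric.ball c R := by rw [Metric.mem_ball]; linarith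
  by_cases hzn : ∃ i ∈ s, z = v i
  · obtain ⟨i, hi, rfl⟩ := hzn
    rw [Lagrange.eval_interpolate_at_node _ hv hi, sub_self, norm_zero,
      Finset.prod_eq_zero hi (by simp), zero_mul]
  push Not at hzn
  have hsub : ∀ i ∈ s, z - v i ≠ 0 := fun i hi => sub_ne_zero.mpr (hzn i hi)
  have hsph : ∀ ζ ∈ Metric.sphere c R, ∀ w ∈ Metric.ball c R, ζ - w ≠ 0 := by
    intro ζ hζ w hw h
    rw [sub_eq_zero] at h
    rw [Metric.mem_sphere] at hζ
    rw [Metric.mem_ball, ← h, hζ] at hw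
    exact lt_irrefl _ hw
  have hcauchy : ∀ w ∈ Metric.ball c R,
      ∮ ζ in C(c, R), (ζ - w)⁻¹ * F ζ = (2 * Real.pi * Complex.I) * F w := by
    intro w hw
    exact Complex.circleIntegral_sub_inv_smul_of_differentiable_on_off_countable
      Set.countable_empty hw (hF.continuousOn.mono hcU)
      (fun x hx => hF.differentiableAt
        (hU.mem_nhds (hcU (Metric.ball_subset_closedBall hx.1))))
  have hcont : ∀ w ∈ Metric.ball c R,
      CircleIntegrable (fun ζ => (ζ - w)⁻¹ * F ζ) c R := by
    intro w hw
    refine ContinuousOn.circleIntegrable hR.le ?_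
    refine ContinuousOn.mul (ContinuousOn.inv₀ (by fun_prop) fun ζ hζ => hsph ζ hζ w hw) ?_
    exact hF.continuousOn.mono (Metric.sphere_subset_closedBall.trans hcU)
  set N : ℂ → ℂ := fun ζ => ∏ i ∈ s, (ζ - v i) with hN
  have hpf : ∀ ζ, (∀ i ∈ s, ζ ≠ v i) →
      N ζ * ∑ i ∈ s, Lagrange.nodalWeight s v i * (ζ - v i)⁻¹ = 1 := by
    intro ζ hζ
    have := Lagrange.eval_interpolate_not_at_node (s := s) (v := v) 1 hζ
    rw [Lagrange.interpolate_one hv hs, Polynomial.eval_one, Lagrange.eval_nodal] at this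
    simpa using this.symm
  have hNz : N z ≠ 0 := Finset.prod_ne_zero_iff.mpr hsub
  -- partial fractions reduce the remainder integral to Cauchy's formula at `z` and the nodes
  have hcauchy : ∮ ζ in C(c, R), ((N ζ)⁻¹ * (ζ - z)⁻¹) * F ζ =
      (2 * Real.pi * Complex.I) * ((N z)⁻¹ *
        (F z - Polynomial.eval z (Lagrange.interpolate s v fun i => F (v i)))) := by
    have h1 : Set.EqOn (fun ζ => ((N ζ)⁻¹ * (ζ - z)⁻¹) * F ζ)
        (fun ζ => ∑ i ∈ s, (Lagrange.nodalWeight s v i * (z - v i)⁻¹) *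
          ((ζ - z)⁻¹ * F ζ - (ζ - v i)⁻¹ * F ζ)) (Metric.sphere c R) := by
      intro ζ hζ
      have h2 : (N ζ)⁻¹ = ∑ i ∈ s, Lagrange.nodalWeight s v i * (ζ - v i)⁻¹ :=
        inv_eq_of_mul_eq_one_right
          (hpf ζ fun i hi => sub_ne_zero.mp (hsph ζ hζ _ (hvR i hi)))
      simp only [h2, Finset.sum_mul]
      refine Finset.sum_congr rfl fun i hi => ?_
      have h3 := hsph ζ hζ _ (hvR i hi)
      have h4 := hsph ζ hζ z hzR
      have h5 := hsub i hi
      field_simp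
      ring
    rw [circleIntegral.integral_congr hR.le h1, circleIntegral.integral_fun_sum]
    · have h6 : ∀ i ∈ s, (∮ ζ in C(c, R), (Lagrange.nodalWeight s v i * (z - v i)⁻¹) *
          ((ζ - z)⁻¹ * F ζ - (ζ - v i)⁻¹ * F ζ)) =
          (2 * Real.pi * Complex.I) * (Lagrange.nodalWeight s v i * (z - v i)⁻¹ * F z -
            Lagrange.nodalWeight s v i * (z - v i)⁻¹ * F (v i)) := by
        intro i hi
        rw [circleIntegral.integral_const_mul,
          circleIntegral.integral_sub (hcont z hzR) (hcont _ (hvR i hi)),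
          hcauchy z hzR, hcauchy _ (hvR i hi)]
        ring
      rw [Finset.sum_congr rfl h6, ← Finset.mul_sum, Finset.sum_sub_distrib, ← Finset.sum_mul,
        Lagrange.eval_interpolate_not_at_node _ hzn, Lagrange.eval_nodal,
        ← inv_eq_of_mul_eq_one_right (hpf z hzn)]
      change _ = _ * ((N z)⁻¹ * (F z - N z * _))
      rw [mul_sub (N z)⁻¹, inv_mul_cancel_left₀ hNz]
    · intro i hi
      exact ((hcont z hzR).sub (hcont _ (hvR i hi))).const_fun_smul
  have hbound : ‖∮ ζ in C(c, R), ((N ζ)⁻¹ * (ζ - z)⁻¹) * F ζ‖ ≤ 2 * Real.pi * R * (A / d) := by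
    refine circleIntegral.norm_integral_le_of_norm_le_const hR.le fun ζ hζ => ?_
    have h1 : 0 < ‖N ζ‖ := norm_pos_iff.mpr
      (Finset.prod_ne_zero_iff.mpr fun i hi => hsph ζ hζ _ (hvR i hi))
    have h2 : ‖N ζ‖ = ∏ i ∈ s, ‖ζ - v i‖ := norm_prod _ _
    have h3 : d ≤ ‖ζ - z‖ := by
      have := dist_triangle ζ z c
      rw [Metric.mem_sphere.mp hζ, dist_eq_norm ζ z] at this
      linarith
    have h4 := hA ζ hζ
    rw [← h2] at h4
    rw [norm_mul, norm_mul, norm_inv, norm_inv]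
    have h5 : ‖N ζ‖⁻¹ * ‖F ζ‖ ≤ A := by
      rw [inv_mul_le_iff₀ h1]; linarith
    have hA0 : 0 ≤ A := le_trans (by positivity) h5
    calc ‖N ζ‖⁻¹ * ‖ζ - z‖⁻¹ * ‖F ζ‖ = (‖N ζ‖⁻¹ * ‖F ζ‖) * ‖ζ - z‖⁻¹ := by ring
      _ ≤ A * d⁻¹ := by gcongr
      _ = A / d := rfl
  rw [hcauchy, norm_mul, norm_mul (N z)⁻¹, norm_inv] at hbound
  have h4 : ‖(2 * (Real.pi : ℂ) * Complex.I)‖ = 2 * Real.pi := by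
    simp [abs_of_pos Real.pi_pos]
  rw [h4, mul_assoc (2 * Real.pi) R] at hbound
  have h5 := le_of_mul_le_mul_left hbound Real.two_pi_pos
  rw [inv_mul_le_iff₀ (norm_pos_iff.mpr hNz), norm_prod] at h5
  rwa [mul_div_assoc]

/-! ### Functions small on a connected set -/

/-- The product of the distances from the node `j` to the other nodes of `0, …, j + l`. -/
lemma prod_abs_sub_erase (j l : ℕ) :
    ∏ i ∈ (Finset.range (j + l + 1)).erase j, |(j : ℝ) - i| = j.factorial * l.factorial := by
  have h : ∏ i ∈ (Finset.range (j + l + 1)).erase j, |(j : ℝ) - i| =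
      ∏ i ∈ Finset.range (j + l + 1), if i = j then 1 else |(j : ℝ) - i| := by
    rw [← Finset.mul_prod_erase (Finset.range (j + l + 1)) _
      (Finset.mem_range.mpr (by omega : j < j + l + 1)), if_pos rfl, one_mul]
    exact Finset.prod_congr rfl fun i hi => by rw [if_neg (Finset.ne_of_mem_erase hi)]
  rw [h]
  induction l with
  | zero =>
    rw [add_zero, Finset.prod_range_succ, if_pos rfl, mul_one, Nat.factorial_zero, Nat.cast_one,
      mul_one, ← Finset.prod_range_reflect, ← Finset.prod_range_add_one_eq_factorial,
      Nat.cast_prod]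
    refine Finset.prod_congr rfl fun i hi => ?_
    have hi' := Finset.mem_range.mp hi
    rw [if_neg (by omega), Nat.sub_sub, Nat.cast_sub (by omega), sub_sub_cancel, add_comm 1 i,
      abs_of_nonneg (by positivity)]
  | succ l ih =>
    have h2 := ih (by
      rw [← Finset.mul_prod_erase (Finset.range (j + l + 1)) _
        (Finset.mem_range.mpr (by omega : j < j + l + 1)), if_pos rfl, one_mul]
      exact Finset.prod_congr rfl fun i hi => by rw [if_neg (Finset.ne_of_mem_erase hi)])
    rw [← add_assoc, Finset.prod_range_succ, h2, if_neg (by omega), Nat.factorial_succ]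
    have : |(j : ℝ) - ((j + l + 1 : ℕ) : ℝ)| = l + 1 := by
      push_cast
      rw [show (j : ℝ) - (j + l + 1) = -(l + 1) by ring, abs_neg, abs_of_nonneg (by positivity)]
    rw [this]
    push_cast
    ring

/-- The Lebesgue constant of interpolation at `k + 1` nodes which are separated like `0, …, k`. -/
lemma sum_lebesgue_le (k : ℕ) :
    ∑ j ∈ Finset.range (k + 1), ((2 * k : ℝ) ^ k / (j.factorial * (k - j).factorial)) ≤ 12 ^ k := by
  have h1 : ∀ j ∈ Finset.range (k + 1), ((2 * k : ℝ) ^ k / (j.factorial * (k - j).factorial)) =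
      (2 * k : ℝ) ^ k / k.factorial * (k.choose j : ℝ) := by
    intro j hj
    have hj' : j ≤ k := by have := Finset.mem_range.mp hj; omega
    rw [Nat.cast_choose ℝ hj']
    have := Nat.factorial_ne_zero k
    field_simp
  rw [Finset.sum_congr rfl h1, ← Finset.mul_sum, ← Nat.cast_sum, Nat.sum_range_choose]
  have h2 : (k : ℝ) ^ k / k.factorial ≤ 3 ^ k := by
    calc (k : ℝ) ^ k / k.factorial ≤ Real.exp k := Real.pow_div_factorial_le_exp _ (by positivity) _
      _ = Real.exp 1 ^ k := by rw [← Real.exp_nat_mul, mul_one]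
      _ ≤ 3 ^ k := by gcongr; exact Real.exp_one_lt_three.le
  calc (2 * k : ℝ) ^ k / k.factorial * ((2 ^ k : ℕ) : ℝ) = 4 ^ k * ((k : ℝ) ^ k / k.factorial) := by
        push_cast
        rw [mul_pow, show (4 : ℝ) = 2 * 2 by norm_num, mul_pow]
        ring
    _ ≤ 4 ^ k * 3 ^ k := by gcongr
    _ = 12 ^ k := by rw [← mul_pow]; norm_num

/-- A quantitative form of the non-thinness of connected sets at their boundary points.
If `|f| ≤ m` on a connected set `E` that joins `w₀` to distance `R`, then `f` is almost as small
on the disc of radius `R` about `w₀`: interpolate `f` at `k + 1` nodes of `E`, one on each of the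
circles of radius `jR/k`. The factor `12 ^ k` does not depend on the radius `R`, while the
interpolation error decays like `(4R/s)^k`. -/
lemma norm_le_of_small_on_connected {E : Set ℂ} (hE : IsPreconnected E) {w₀ p : ℂ} (hw : w₀ ∈ E)
    (hp : p ∈ E) {R s m : ℝ} (hR : 0 < R) (hs : 2 * R ≤ s) (hpR : R ≤ dist p w₀)
    {f : ℂ → ℂ} {U : Set ℂ} (hU : IsOpen U) (hf : DifferentiableOn ℂ f U)
    (hsU : Metric.closedBall w₀ s ⊆ U) (hf1 : ∀ z ∈ Metric.closedBall w₀ s, ‖f z‖ ≤ 1)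
    (hfE : ∀ z ∈ E, ‖f z‖ ≤ m) {z : ℂ} (hz : dist z w₀ ≤ R) {k : ℕ} (hk : 1 ≤ k) :
    ‖f z‖ ≤ m * 12 ^ k + 2 * (4 * R / s) ^ (k + 1) := by
  have hk0 : (0 : ℝ) < k := by exact_mod_cast hk
  have hm : 0 ≤ m := (norm_nonneg _).trans (hfE _ hw)
  have hiv : Set.Icc (dist w₀ w₀) (dist p w₀) ⊆ (fun x => dist x w₀) '' E :=
    hE.intermediate_value hw hp (f := fun x => dist x w₀)
      (continuous_id.dist continuous_const).continuousOn
  have hnode : ∀ j : ℕ, ∃ x : ℂ, j ≤ k → x ∈ E ∧ dist x w₀ = j * (R / k) := by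
    intro j
    by_cases hj : j ≤ k
    · have hj' : (j : ℝ) ≤ k := by exact_mod_cast hj
      have : (j : ℝ) * (R / k) ∈ Set.Icc (dist w₀ w₀) (dist p w₀) := by
        refine ⟨by rw [dist_self]; positivity, le_trans ?_ hpR⟩
        calc (j : ℝ) * (R / k) ≤ k * (R / k) := by gcongr
          _ = R := by field_simp
      obtain ⟨x, hx, hx2⟩ := hiv this
      exact ⟨x, fun _ => ⟨hx, hx2⟩⟩
    · exact ⟨0, fun h => absurd h hj⟩
  choose v hv using hnode
  have hsep : ∀ i ≤ k, ∀ j ≤ k, |(j : ℝ) - i| * (R / k) ≤ ‖v j - v i‖ := by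
    intro i hi j hj
    have h1 := abs_dist_sub_le (v j) (v i) w₀
    rw [(hv j hj).2, (hv i hi).2, ← sub_mul, abs_mul, abs_of_pos (div_pos hR hk0)] at h1
    rwa [← dist_eq_norm]
  have hdistR : ∀ i ≤ k, dist (v i) w₀ ≤ R := by
    intro i hi
    have hi' : (i : ℝ) ≤ k := by exact_mod_cast hi
    rw [(hv i hi).2]
    calc (i : ℝ) * (R / k) ≤ k * (R / k) := by gcongr
      _ = R := by field_simp
  have hzv : ∀ i ≤ k, ‖z - v i‖ ≤ 2 * R := by
    intro i hi
    rw [← dist_eq_norm]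
    have := dist_triangle_right z (v i) w₀
    linarith [hdistR i hi]
  have hmem : ∀ i, i ∈ Finset.range (k + 1) ↔ i ≤ k := fun i => by
    rw [Finset.mem_range]; omega
  have hinj : Set.InjOn v (Finset.range (k + 1)) := by
    intro i hi j hj hij
    have h1 := hsep i ((hmem i).mp hi) j ((hmem j).mp hj)
    rw [hij, sub_self, norm_zero] at h1
    have h2 : |(j : ℝ) - i| ≤ 0 := by
      by_contra h
      push Not at h
      have := mul_pos h (div_pos hR hk0)
      linarith
    have h3 := abs_nonpos_iff.mp h2
    have h4 : (j : ℝ) = i := by linarith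
    exact_mod_cast h4.symm
  have hs0 : 0 < s := by linarith
  have hrem := norm_sub_interpolate_le (s := Finset.range (k + 1)) ⟨0, by simp⟩ hinj hU hf hs0 hsU
    (fun i hi => by
      rw [Metric.mem_ball]; have := hdistR i ((hmem i).mp hi); linarith)
    (z := z) (d := s / 2) (A := (2 / s) ^ (k + 1)) (by linarith) (by linarith) (by
      intro ζ hζ
      refine (hf1 ζ (Metric.sphere_subset_closedBall hζ)).trans ?_
      have h1 : (s / 2) ^ (k + 1) ≤ ∏ i ∈ Finset.range (k + 1), ‖ζ - v i‖ := by
        have := Finset.prod_le_prod (s := Finset.range (k + 1)) (f := fun _ => s / 2)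
          (g := fun i => ‖ζ - v i‖) (fun _ _ => by positivity) (fun i hi => by
            rw [← dist_eq_norm]
            have h2 := dist_triangle ζ (v i) w₀
            rw [Metric.mem_sphere.mp hζ] at h2
            have := hdistR i ((hmem i).mp hi)
            linarith)
        rwa [Finset.prod_const, Finset.card_range] at this
      calc (1 : ℝ) = (2 / s) ^ (k + 1) * (s / 2) ^ (k + 1) := by
            rw [← mul_pow, show 2 / s * (s / 2) = 1 by field_simp, one_pow]
        _ ≤ _ := by gcongr)
  have hprod : ∏ i ∈ Finset.range (k + 1), ‖z - v i‖ ≤ (2 * R) ^ (k + 1) := by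
    have := Finset.prod_le_prod (s := Finset.range (k + 1)) (f := fun i => ‖z - v i‖)
      (g := fun _ => 2 * R) (fun _ _ => norm_nonneg _) (fun i hi => hzv i ((hmem i).mp hi))
    simpa using this
  have herr : (∏ i ∈ Finset.range (k + 1), ‖z - v i‖) * (s * (2 / s) ^ (k + 1) / (s / 2)) ≤
      2 * (4 * R / s) ^ (k + 1) := by
    calc _ ≤ (2 * R) ^ (k + 1) * (s * (2 / s) ^ (k + 1) / (s / 2)) := by gcongr
      _ = 2 * ((2 * R) * (2 / s)) ^ (k + 1) := by
          rw [mul_pow (2 * R), mul_div_right_comm, div_div_cancel₀ hs0.ne']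
          generalize (2 * R) ^ (k + 1) = a
          generalize (2 / s) ^ (k + 1) = b
          ring
      _ = _ := by congr 2; ring
  have hbasis : ∀ j ∈ Finset.range (k + 1),
      ‖Polynomial.eval z (Lagrange.basis (Finset.range (k + 1)) v j)‖ ≤
        (2 * k : ℝ) ^ k / (j.factorial * (k - j).factorial) := by
    intro j hj
    have hjk := (hmem j).mp hj
    have h1 : (Finset.range (k + 1)) = Finset.range (j + (k - j) + 1) := by
      congr 1; omega
    have h2 := prod_abs_sub_erase j (k - j)
    rw [← h1] at h2
    rw [← h2, Lagrange.basis, Polynomial.eval_prod, norm_prod]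
    have h3 : (2 * k : ℝ) ^ k = ∏ _i ∈ (Finset.range (k + 1)).erase j, (2 * k : ℝ) := by
      rw [Finset.prod_const, Finset.card_erase_of_mem hj, Finset.card_range,
        Nat.add_sub_cancel]
    rw [h3, ← Finset.prod_div_distrib]
    refine Finset.prod_le_prod (fun _ _ => norm_nonneg _) fun i hi => ?_
    have hi' := (hmem i).mp (Finset.mem_of_mem_erase hi)
    have hne : |(j : ℝ) - i| ≠ 0 := by
      rw [abs_ne_zero, sub_ne_zero]
      exact_mod_cast (Finset.ne_of_mem_erase hi).symm
    have hpos : 0 < |(j : ℝ) - i| := lt_of_le_of_ne (abs_nonneg _) hne.symm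
    simp only [Lagrange.basisDivisor, Polynomial.eval_mul, Polynomial.eval_C, Polynomial.eval_sub,
      Polynomial.eval_X, norm_mul, norm_inv]
    calc ‖v j - v i‖⁻¹ * ‖z - v i‖ ≤ (|(j : ℝ) - i| * (R / k))⁻¹ * (2 * R) := by
          gcongr
          · exact hsep i hi' j hjk
          · exact hzv i hi'
      _ = 2 * k / |(j : ℝ) - i| := by field_simp
  have hlagr : ‖Polynomial.eval z (Lagrange.interpolate (Finset.range (k + 1)) v
      fun i => f (v i))‖ ≤ m * 12 ^ k := by
    rw [Lagrange.interpolate_apply, Polynomial.eval_finsetSum]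
    refine (norm_sum_le _ _).trans ?_
    calc _ ≤ ∑ j ∈ Finset.range (k + 1),
          m * ((2 * k : ℝ) ^ k / (j.factorial * (k - j).factorial)) := by
          refine Finset.sum_le_sum fun j hj => ?_
          rw [Polynomial.eval_mul, Polynomial.eval_C, norm_mul]
          exact mul_le_mul (hfE _ (hv j ((hmem j).mp hj)).1) (hbasis j hj) (norm_nonneg _) hm
      _ ≤ m * 12 ^ k := by
          rw [← Finset.mul_sum]
          exact mul_le_mul_of_nonneg_left (sum_lebesgue_le k) hm
  have := norm_le_norm_add_norm_sub' (f z)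
    (Polynomial.eval z (Lagrange.interpolate (Finset.range (k + 1)) v fun i => f (v i)))
  linarith

/-! ### Blaschke factors and the Green function -/

/-- The Blaschke factor `(z - w) / (1 - w̄ z)` of the unit disk with zero `w`. -/
def blF (w z : ℂ) : ℂ := (z - w) / (1 - (starRingEnd ℂ) w * z)

lemma one_sub_conj_mul_ne_zero {w z : ℂ} (hw : ‖w‖ < 1) (hz : ‖z‖ ≤ 1) :
    1 - (starRingEnd ℂ) w * z ≠ 0 := by
  intro h
  have h1 : (starRingEnd ℂ) w * z = 1 := (sub_eq_zero.mp h).symm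
  have h2 : ‖w‖ * ‖z‖ = 1 := by
    rw [← RCLike.norm_conj w, ← norm_mul, h1, norm_one]
  nlinarith [norm_nonneg w, norm_nonneg z]

lemma norm_sq_one_sub_conj_mul (w z : ℂ) :
    ‖1 - (starRingEnd ℂ) w * z‖ ^ 2 - ‖z - w‖ ^ 2 = (1 - ‖w‖ ^ 2) * (1 - ‖z‖ ^ 2) := by
  simp only [Complex.sq_norm, Complex.normSq_apply]
  simp
  ring

lemma norm_one_sub_conj_mul_comm (w z : ℂ) :
    ‖1 - (starRingEnd ℂ) w * z‖ = ‖1 - (starRingEnd ℂ) z * w‖ := by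
  rw [← RCLike.norm_conj (1 - (starRingEnd ℂ) w * z)]
  simp [mul_comm]

lemma norm_blF_comm (w z : ℂ) : ‖blF w z‖ = ‖blF z w‖ := by
  rw [blF, blF, norm_div, norm_div, norm_one_sub_conj_mul_comm, norm_sub_rev]

lemma norm_blF_le_one {w z : ℂ} (hw : ‖w‖ < 1) (hz : ‖z‖ ≤ 1) : ‖blF w z‖ ≤ 1 := by
  have h0 := norm_pos_iff.mpr (one_sub_conj_mul_ne_zero hw hz)
  rw [blF, norm_div, div_le_one h0]
  have := norm_sq_one_sub_conj_mul w z
  have h1 : 0 ≤ (1 - ‖w‖ ^ 2) * (1 - ‖z‖ ^ 2) := by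
    apply mul_nonneg <;> nlinarith [norm_nonneg w, norm_nonneg z]
  exact le_of_sq_le_sq (by linarith) h0.le

lemma blF_eq_zero_iff {w z : ℂ} (hw : ‖w‖ < 1) (hz : ‖z‖ ≤ 1) : blF w z = 0 ↔ z = w := by
  rw [blF, div_eq_zero_iff, or_iff_left (one_sub_conj_mul_ne_zero hw hz), sub_eq_zero]

lemma differentiableAt_blF {w z : ℂ} (hw : ‖w‖ < 1) (hz : ‖z‖ ≤ 1) :
    DifferentiableAt ℂ (blF w) z := by
  unfold blF
  exact DifferentiableAt.div (by fun_prop) (by fun_prop) (one_sub_conj_mul_ne_zero hw hz)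

lemma differentiableOn_blF {w : ℂ} (hw : ‖w‖ < 1) : DifferentiableOn ℂ (blF w) unitDisk :=
  fun _ hz => (differentiableAt_blF hw (le_of_lt hz)).differentiableWithinAt

lemma one_sub_norm_blF_sq {w z : ℂ} (hw : ‖w‖ < 1) (hz : ‖z‖ ≤ 1) :
    1 - ‖blF w z‖ ^ 2 = (1 - ‖w‖ ^ 2) * (1 - ‖z‖ ^ 2) / ‖1 - (starRingEnd ℂ) w * z‖ ^ 2 := by
  have h0 := norm_pos_iff.mpr (one_sub_conj_mul_ne_zero hw hz)
  rw [blF, norm_div, ← norm_sq_one_sub_conj_mul w z, sub_div, div_self (by positivity), div_pow]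

/-- A Blaschke product of at most `n` factors with zeros in a fixed compact disc stays bounded
below at distance of order `1 / n` from the unit circle. -/
lemma half_le_norm_prod_blF {κ : Type*} {s : Finset κ} {v : κ → ℂ} {ρ : ℝ} (hρ : ρ < 1)
    (hv : ∀ i ∈ s, ‖v i‖ ≤ ρ) {n : ℕ} (hn : 1 ≤ n) (hs : s.card ≤ n) {z : ℂ}
    (hz : ‖z‖ = 1 - (1 - ρ) ^ 2 / 4 / n) (hρ0 : 0 ≤ ρ) : 1 / 2 ≤ ‖∏ i ∈ s, blF (v i) z‖ := by
  have hn0 : (1:ℝ) ≤ n := by exact_mod_cast hn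
  set q := (1 - ρ) ^ 2 / 4 / n with hq
  have hq0 : 0 < q := by
    have : 0 < 1 - ρ := by linarith
    positivity
  have hq1 : q * n = (1 - ρ) ^ 2 / 4 := by rw [hq]; field_simp
  have hqle : q ≤ (1-ρ)^2/4 := by nlinarith
  have hz1 : ‖z‖ ≤ 1 := by linarith
  have h1 : ∀ i ∈ s, 1 - 2 * q / (1 - ρ) ^ 2 ≤ ‖blF (v i) z‖ ^ 2 := by
    intro i hi
    have hvi : ‖v i‖ < 1 := (hv i hi).trans_lt hρ
    have h2 := one_sub_norm_blF_sq hvi hz1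
    have h3 : 1 - ρ ≤ ‖1 - (starRingEnd ℂ) (v i) * z‖ := by
      have := norm_sub_norm_le (1:ℂ) ((starRingEnd ℂ) (v i) * z)
      rw [norm_one, norm_mul, RCLike.norm_conj] at this
      have : ‖v i‖ * ‖z‖ ≤ ρ * 1 := mul_le_mul (hv i hi) hz1 (norm_nonneg _) hρ0
      linarith
    have h4 : (1 - ‖v i‖ ^ 2) * (1 - ‖z‖ ^ 2) ≤ 2 * q := by
      have a : 1 - ‖v i‖ ^ 2 ≤ 1 := by nlinarith [sq_nonneg ‖v i‖]
      have b : 0 ≤ 1 - ‖z‖ ^ 2 := by nlinarith [norm_nonneg z]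
      have c : 1 - ‖z‖ ^ 2 ≤ 2 * q := by nlinarith [norm_nonneg z]
      nlinarith
    have h5 : (1 - ‖v i‖ ^ 2) * (1 - ‖z‖ ^ 2) / ‖1 - (starRingEnd ℂ) (v i) * z‖ ^ 2
        ≤ 2 * q / (1 - ρ) ^ 2 := by
      have : 0 < 1 - ρ := by linarith
      gcongr
    linarith
  have ht : 2 * q / (1 - ρ) ^ 2 = 1 / (2 * n) := by
    have : (1 - ρ) ≠ 0 := by linarith
    rw [hq]; field_simp; norm_num
  have hsq : 1 / 2 ≤ ‖∏ i ∈ s, blF (v i) z‖ ^ 2 := by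
    rw [norm_prod, ← Finset.prod_pow]
    rw [ht] at h1
    have hb : (1:ℝ) / (2 * n) ≤ 1 / 2 := by
      rw [div_le_div_iff₀] <;> nlinarith
    calc (1:ℝ)/2 ≤ 1 + (n:ℝ) * (-(1 / (2 * n))) := by field_simp; norm_num
      _ ≤ (1 + (-(1 / (2 * n)))) ^ n := one_add_mul_le_pow (by linarith) n
      _ ≤ (1 - 1 / (2 * n)) ^ s.card := by
          rw [← sub_eq_add_neg]
          exact pow_le_pow_of_le_one (by linarith) (by linarith [show (0:ℝ) ≤ 1 / (2 * n) by positivity]) hs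
      _ = ∏ _i ∈ s, (1 - 1 / (2 * (n:ℝ))) := by simp
      _ ≤ _ := Finset.prod_le_prod (fun _ _ => by linarith) h1
  nlinarith [norm_nonneg (∏ i ∈ s, blF (v i) z)]

lemma greenFnE_of_ne {z w : ℂ} (h : z ≠ w) :
    greenFnE z w = ENNReal.ofReal (-Real.log ‖blF w z‖) := by
  rw [greenFnE, if_neg h, blF, ← Real.log_inv, ← norm_inv, inv_div]

lemma greenFnE_self (z : ℂ) : greenFnE z z = ⊤ := by simp [greenFnE]

lemma greenFnE_comm (z w : ℂ) : greenFnE z w = greenFnE w z := by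
  by_cases h : z = w
  · rw [h]
  · rw [greenFnE_of_ne h, greenFnE_of_ne (Ne.symm h), norm_blF_comm]

lemma measurable_greenFnE : Measurable (Function.uncurry greenFnE) := by
  unfold Function.uncurry greenFnE
  refine Measurable.ite (measurableSet_eq_fun measurable_fst measurable_snd) measurable_const ?_
  have hc : Measurable (fun w : ℂ => (starRingEnd ℂ) w) := Complex.continuous_conj.measurable
  have : Measurable (fun a : ℂ × ℂ => (starRingEnd ℂ) a.2) := hc.comp measurable_snd
  refine ENNReal.measurable_ofReal.comp (Real.measurable_log.comp ?_)
  refine Measurable.norm ?_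
  exact ((measurable_const.sub (this.mul measurable_fst)).div (measurable_fst.sub measurable_snd))

lemma neg_log_norm_blF_nonneg {z w : ℂ} (hz : ‖z‖ < 1) (hw : ‖w‖ < 1) :
    0 ≤ -Real.log ‖blF w z‖ := by
  have := Real.log_nonpos (norm_nonneg _) (norm_blF_le_one hw hz.le)
  linarith

/-! ### Green potentials of circles -/

/-- The normalized arc length measure on the circle of centre `c` and radius `δ`. -/
def circM (c : ℂ) (δ : ℝ) : Measure ℂ :=
  Measure.map (circleMap c δ)
    ((ENNReal.ofReal (2 * Real.pi))⁻¹ • (volume : Measure ℝ).restrict (Ioc 0 (2 * Real.pi)))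

lemma lintegral_circM (c : ℂ) (δ : ℝ) {f : ℂ → ℝ≥0∞} (hf : Measurable f) :
    ∫⁻ w, f w ∂circM c δ =
      (ENNReal.ofReal (2 * Real.pi))⁻¹ * ∫⁻ θ in Ioc 0 (2 * Real.pi), f (circleMap c δ θ) := by
  rw [circM, lintegral_map hf (continuous_circleMap c δ).measurable, lintegral_smul_measure,
    smul_eq_mul]

instance (c : ℂ) (δ : ℝ) : IsProbabilityMeasure (circM c δ) := by
  constructor
  rw [circM, Measure.map_apply (continuous_circleMap c δ).measurable MeasurableSet.univ]
  simp only [preimage_univ, Measure.smul_apply, Measure.restrict_apply_univ, Real.volume_Ioc,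
    sub_zero, smul_eq_mul]
  exact ENNReal.inv_mul_cancel (by simp [Real.pi_pos]) ENNReal.ofReal_ne_top

lemma circM_compl_sphere (c : ℂ) {δ : ℝ} (hδ : 0 ≤ δ) {K : Set ℂ} (hK : MeasurableSet K)
    (h : Metric.closedBall c δ ⊆ K) : circM c δ Kᶜ = 0 := by
  rw [circM, Measure.map_apply (continuous_circleMap c δ).measurable hK.compl]
  have : circleMap c δ ⁻¹' Kᶜ = ∅ := by
    ext θ
    simp only [mem_preimage, mem_compl_iff, mem_empty_iff_false, iff_false, not_not]
    exact h (circleMap_mem_closedBall c hδ θ)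
  simp [this]

/-- The Green potential of a circle, from the mean value of `log |w - z|` over a circle. -/
lemma lintegral_greenFnE_circM {c z : ℂ} {δ : ℝ} (hδ : 0 < δ) (hc : ‖c‖ + δ < 1) (hz : ‖z‖ < 1) :
    ∫⁻ w, greenFnE z w ∂circM c δ =
      ENNReal.ofReal (Real.log ‖1 - (starRingEnd ℂ) z * c‖
        - (Real.log δ + Real.posLog (δ⁻¹ * ‖c - z‖))) := by
  have hball : ∀ w ∈ Metric.closedBall c δ, ‖w‖ < 1 := by
    intro w hw
    rw [mem_closedBall_iff_norm] at hw
    have := norm_le_norm_add_norm_sub' w c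
    linarith
  have hm : Measurable (fun w => greenFnE z w) := measurable_greenFnE.of_uncurry_left
  rw [lintegral_circM c δ hm]
  set F : ℂ → ℝ := fun w => Real.log ‖1 - (starRingEnd ℂ) z * w‖ - Real.log ‖w - z‖ with hF
  have hgn : AnalyticOnNhd ℂ (fun w : ℂ => 1 - (starRingEnd ℂ) z * w) (Metric.closedBall c |δ|) :=
    fun w _ => by fun_prop
  have hnz : ∀ w ∈ Metric.closedBall c |δ|, 1 - (starRingEnd ℂ) z * w ≠ 0 := by
    intro w hw
    rw [abs_of_pos hδ] at hw
    exact one_sub_conj_mul_ne_zero hz (hball w hw).le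
  have h1 : CircleIntegrable (fun w => Real.log ‖1 - (starRingEnd ℂ) z * w‖) c δ :=
    MeromorphicOn.circleIntegrable_log_norm (fun w _ => by fun_prop)
  have h2 : CircleIntegrable (fun w => Real.log ‖w - z‖) c δ :=
    circleIntegrable_log_norm_sub_const δ
  have havg : Real.circleAverage F c δ = Real.log ‖1 - (starRingEnd ℂ) z * c‖
        - (Real.log δ + Real.posLog (δ⁻¹ * ‖c - z‖)) := by
    rw [hF, Real.circleAverage_fun_sub h1 h2, hgn.circleAverage_log_norm_of_ne_zero hnz,
      circleAverage_log_norm_sub_const_eq_log_radius_add_posLog hδ.ne']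
  rw [← havg, Real.circleAverage_def,
    intervalIntegral.integral_of_le (by positivity), smul_eq_mul,
    ENNReal.ofReal_mul (p := (2 * Real.pi)⁻¹) (by positivity),
    ENNReal.ofReal_inv_of_pos (x := 2 * Real.pi) (by positivity)]
  congr 1
  have hae : ∀ᵐ θ ∂((volume : Measure ℝ).restrict (Ioc 0 (2 * Real.pi))), circleMap c δ θ ≠ z := by
    apply ae_restrict_of_ae
    have := ((countable_singleton z).preimage_circleMap c hδ.ne').measure_zero volume
    exact measure_eq_zero_iff_ae_notMem.mp this
  have hFb : ∀ w ∈ Metric.closedBall c δ, w ≠ z → F w = - Real.log ‖blF w z‖ := by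
    intro w hw hwz
    rw [norm_blF_comm, blF, norm_div, Real.log_div]
    · rw [hF]; ring
    · simpa [sub_eq_zero] using hwz
    · exact norm_ne_zero_iff.mpr (one_sub_conj_mul_ne_zero hz (hball w hw).le)
  rw [ofReal_integral_eq_lintegral_ofReal]
  · apply lintegral_congr_ae
    filter_upwards [hae] with θ hθ
    have hmem := circleMap_mem_closedBall c hδ.le θ
    rw [greenFnE_of_ne (Ne.symm hθ), hFb _ hmem hθ]
  · have := (intervalIntegrable_iff_integrableOn_Ioc_of_le (by positivity)).mp (h1.sub h2)
    exact this
  · filter_upwards [hae] with θ hθ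
    have hmem := circleMap_mem_closedBall c hδ.le θ
    rw [hFb _ hmem hθ]
    exact neg_log_norm_blF_nonneg hz (hball _ hmem)

lemma lintegral_greenFnE_circM_le_log {c z : ℂ} {δ : ℝ} (hδ : 0 < δ) (hc : ‖c‖ + δ < 1)
    (hz : ‖z‖ < 1) :
    ∫⁻ w, greenFnE z w ∂circM c δ ≤ ENNReal.ofReal (Real.log (2 / δ)) := by
  rw [lintegral_greenFnE_circM hδ hc hz]
  apply ENNReal.ofReal_le_ofReal
  have h1 : Real.log ‖1 - (starRingEnd ℂ) z * c‖ ≤ Real.log 2 := by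
    apply Real.log_le_log (norm_pos_iff.mpr (one_sub_conj_mul_ne_zero hz (by linarith)))
    refine (norm_sub_le _ _).trans ?_
    rw [norm_one, norm_mul, RCLike.norm_conj]
    nlinarith [norm_nonneg z, norm_nonneg c]
  rw [Real.log_div (by norm_num) hδ.ne']
  linarith [Real.posLog_nonneg (x := δ⁻¹ * ‖c - z‖)]

/-- The Green function is superharmonic: its mean over a circle is at most its value at the
centre. -/
lemma lintegral_greenFnE_circM_le {c z : ℂ} {δ : ℝ} (hδ : 0 < δ) (hc : ‖c‖ + δ < 1)
    (hz : ‖z‖ < 1) :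
    ∫⁻ w, greenFnE z w ∂circM c δ ≤ greenFnE z c := by
  by_cases hzc : z = c
  · rw [hzc, greenFnE_self]; exact le_top
  rw [lintegral_greenFnE_circM hδ hc hz, greenFnE_of_ne hzc]
  apply ENNReal.ofReal_le_ofReal
  have hcz : ‖c - z‖ ≠ 0 := by simpa [sub_eq_zero] using Ne.symm hzc
  have h0 := norm_ne_zero_iff.mpr (one_sub_conj_mul_ne_zero hz (z := c) (by linarith))
  rw [norm_blF_comm, blF, norm_div, Real.log_div hcz h0]
  have : Real.log (δ⁻¹ * ‖c - z‖) ≤ Real.posLog (δ⁻¹ * ‖c - z‖) := le_max_right _ _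
  rw [Real.log_mul (by positivity) hcz, Real.log_inv] at this
  linarith

/-! ### Extremal Blaschke products -/

lemma greenV_le {Ω : Set ℂ} (μ : Measure ℂ) [IsProbabilityMeasure μ] {K : Set ℂ} (hK : K ⊆ Ω)
    (hc : IsCompact K) (h0 : μ Kᶜ = 0) : greenV Ω ≤ greenEnergy μ :=
  iInf_le_of_le μ (iInf_le_of_le inferInstance (iInf_le_of_le ⟨K, hK, hc, h0⟩ le_rfl))

/-- Smearing `n` points onto circles of radius `δ` gives a competitor for `greenV Ω`; by the
super-mean value property of the Green function its energy is controlled by the discrete energy. -/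
lemma sq_mul_greenV_le {Ω : Set ℂ} {δ : ℝ} (hδ : 0 < δ) {n : ℕ} (hn : 1 ≤ n) (z : Fin n → ℂ)
    (hz : ∀ i, Metric.closedBall (z i) δ ⊆ Ω) (hz1 : ∀ i, ‖z i‖ + δ < 1) :
    (n : ℝ≥0∞) * (n * greenV Ω) ≤
      ∑ i, ∑ j, if i = j then ENNReal.ofReal (Real.log (2 / δ)) else greenFnE (z j) (z i) := by
  have hn0 : (n : ℝ≥0∞) ≠ 0 := by simp; omega
  have hnt : (n : ℝ≥0∞) ≠ ⊤ := ENNReal.natCast_ne_top n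
  set σ : Fin n → Measure ℂ := fun i => circM (z i) δ with hσ
  set μ : Measure ℂ := (n : ℝ≥0∞)⁻¹ • ∑ i, σ i with hμ
  set K : Set ℂ := ⋃ i, Metric.closedBall (z i) δ with hK
  have hKc : IsCompact K := isCompact_iUnion fun i => isCompact_closedBall _ _
  have hσK : ∀ i, σ i Kᶜ = 0 := fun i =>
    circM_compl_sphere _ hδ.le hKc.measurableSet (subset_iUnion (fun i => Metric.closedBall (z i) δ) i)
  have hprob : IsProbabilityMeasure μ := by
    constructor
    simp only [hμ, hσ, Measure.smul_apply, Measure.finsetSum_apply, measure_univ, Finset.sum_const,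
      Finset.card_univ, Fintype.card_fin, nsmul_eq_mul, mul_one, smul_eq_mul]
    exact ENNReal.inv_mul_cancel hn0 hnt
  have hμK : μ Kᶜ = 0 := by
    simp only [hμ, Measure.smul_apply, Measure.finsetSum_apply, smul_eq_mul, hσK,
      Finset.sum_const_zero, mul_zero]
  have hlin : ∀ f : ℂ → ℝ≥0∞, ∫⁻ w, f w ∂μ = (n : ℝ≥0∞)⁻¹ * ∑ i, ∫⁻ w, f w ∂σ i := by
    intro f
    rw [hμ, lintegral_smul_measure, lintegral_finsetSum_measure, smul_eq_mul]
  have hmeas : ∀ j, Measurable fun x => ∫⁻ w, greenFnE x w ∂σ j := fun j =>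
    Measurable.lintegral_prod_right' measurable_greenFnE
  have hD : ∀ i, ∀ᵐ x ∂σ i, ‖x‖ < 1 := by
    intro i
    have : σ i (Metric.closedBall (z i) δ)ᶜ = 0 :=
      circM_compl_sphere _ hδ.le Metric.isClosed_closedBall.measurableSet le_rfl
    filter_upwards [measure_eq_zero_iff_ae_notMem.mp this] with x hx
    rw [notMem_compl_iff, mem_closedBall_iff_norm] at hx
    linarith [norm_le_norm_add_norm_sub' x (z i), hz1 i]
  have hpair : ∀ i j, ∫⁻ x, ∫⁻ w, greenFnE x w ∂σ j ∂σ i ≤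
      if i = j then ENNReal.ofReal (Real.log (2 / δ)) else greenFnE (z j) (z i) := by
    intro i j
    split_ifs with hij
    · calc ∫⁻ x, ∫⁻ w, greenFnE x w ∂σ j ∂σ i
          ≤ ∫⁻ _x, ENNReal.ofReal (Real.log (2 / δ)) ∂σ i := by
            apply lintegral_mono_ae
            filter_upwards [hD i] with x hx
            exact lintegral_greenFnE_circM_le_log hδ (hz1 j) hx
        _ = _ := by simp [hσ]
    · calc ∫⁻ x, ∫⁻ w, greenFnE x w ∂σ j ∂σ i
          ≤ ∫⁻ x, greenFnE x (z j) ∂σ i := by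
            apply lintegral_mono_ae
            filter_upwards [hD i] with x hx
            exact lintegral_greenFnE_circM_le hδ (hz1 j) hx
        _ = ∫⁻ x, greenFnE (z j) x ∂σ i := by simp_rw [greenFnE_comm _ (z j)]
        _ ≤ _ := lintegral_greenFnE_circM_le hδ (hz1 i) (by linarith [hz1 j])
  have hE : greenEnergy μ = (n : ℝ≥0∞)⁻¹ * ((n : ℝ≥0∞)⁻¹ *
      ∑ i, ∑ j, ∫⁻ x, ∫⁻ w, greenFnE x w ∂σ j ∂σ i) := by
    rw [greenEnergy, hlin]
    congr 1
    rw [Finset.mul_sum]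
    refine Finset.sum_congr rfl fun i _ => ?_
    simp_rw [hlin]
    rw [lintegral_const_mul _ (Finset.measurable_fun_sum _ fun j _ => hmeas j),
      lintegral_finsetSum _ fun j _ => hmeas j]
  calc (n : ℝ≥0∞) * (n * greenV Ω) ≤ n * (n * greenEnergy μ) := by
        gcongr
        exact greenV_le μ (iUnion_subset hz) hKc hμK
    _ = ∑ i, ∑ j, ∫⁻ x, ∫⁻ w, greenFnE x w ∂σ j ∂σ i := by
        rw [hE, ← mul_assoc (n : ℝ≥0∞) (n : ℝ≥0∞)⁻¹, ENNReal.mul_inv_cancel hn0 hnt, one_mul,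
          ← mul_assoc, ENNReal.mul_inv_cancel hn0 hnt, one_mul]
    _ ≤ _ := Finset.sum_le_sum fun i _ => Finset.sum_le_sum fun j _ => hpair i j

/-- Moving one point of a configuration changes the product over all pairs by the square of the
product over the pairs containing that point. -/
lemma prod_prod_update {n : ℕ} (q : ℂ → ℂ → ℝ) (hq : ∀ a b, q a b = q b a) (z : Fin n → ℂ)
    (i : Fin n) (w : ℂ) :
    ∏ a, ∏ c ∈ Finset.univ.erase a, q (Function.update z i w c) (Function.update z i w a) =
      (∏ c ∈ Finset.univ.erase i, q (z c) w) ^ 2 *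
        ∏ a ∈ Finset.univ.erase i, ∏ c ∈ (Finset.univ.erase a).erase i, q (z c) (z a) := by
  rw [← Finset.mul_prod_erase _ _ (Finset.mem_univ i), sq, mul_assoc]
  congr 1
  · refine Finset.prod_congr rfl fun c hc => ?_
    rw [Function.update_self, Function.update_of_ne (Finset.ne_of_mem_erase hc)]
  · rw [← Finset.prod_mul_distrib]
    refine Finset.prod_congr rfl fun a ha => ?_
    have hai := Finset.ne_of_mem_erase ha
    have hi : i ∈ Finset.univ.erase a := by simp [Ne.symm hai]
    rw [← Finset.mul_prod_erase _ _ hi, Function.update_self, Function.update_of_ne hai, hq]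
    congr 1
    refine Finset.prod_congr rfl fun c hc => ?_
    rw [Function.update_of_ne (Finset.ne_of_mem_erase hc)]

/-- Points of a compact infinite set maximizing the product of mutual pseudo-hyperbolic
distances: each of them then maximizes, on `K`, the modulus of the Blaschke product of the
others. -/
lemma exists_fekete {K : Set ℂ} (hK : IsCompact K) (hKD : K ⊆ unitDisk) (hinf : K.Infinite)
    (n : ℕ) : ∃ z : Fin n → ℂ, Function.Injective z ∧ (∀ i, z i ∈ K) ∧ ∀ i, ∀ w ∈ K,
      ∏ j ∈ Finset.univ.erase i, ‖blF (z j) w‖ ≤ ∏ j ∈ Finset.univ.erase i, ‖blF (z j) (z i)‖ := by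
  set Φ : (Fin n → ℂ) → ℝ := fun z => ∏ a, ∏ c ∈ Finset.univ.erase a, ‖blF (z c) (z a)‖ with hΦ
  have hcont : ContinuousOn Φ (Set.pi univ fun _ => K) := by
    refine continuousOn_finsetProd _ fun a _ => continuousOn_finsetProd _ fun c _ => ?_
    refine ContinuousOn.norm ?_
    unfold blF
    refine ContinuousOn.div (by fun_prop) ?_ ?_
    · refine Continuous.continuousOn ?_
      have := Complex.continuous_conj
      fun_prop
    · intro z hz
      exact one_sub_conj_mul_ne_zero (hKD (hz c trivial)) (le_of_lt (hKD (hz a trivial)))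
  have hpos : ∀ z : Fin n → ℂ, (∀ i, z i ∈ K) → (0 < Φ z ↔ Function.Injective z) := by
    intro z hz
    have hne : ∀ a c, ‖blF (z c) (z a)‖ ≠ 0 ↔ z a ≠ z c := by
      intro a c
      rw [norm_ne_zero_iff, Ne, blF_eq_zero_iff (hKD (hz c)) (le_of_lt (hKD (hz a)))]
    constructor
    · intro h a c hac
      by_contra hne'
      have := Finset.prod_ne_zero_iff.mp (Finset.prod_ne_zero_iff.mp h.ne' a (Finset.mem_univ _)) c
        (by simp [Ne.symm hne'])
      exact (hne a c).mp this hac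
    · intro h
      refine Finset.prod_pos fun a _ => Finset.prod_pos fun c hc => ?_
      refine lt_of_le_of_ne (norm_nonneg _) (Ne.symm ((hne a c).mpr ?_))
      exact fun h' => (Finset.ne_of_mem_erase hc) (h h').symm
  let e := hinf.natEmbedding K
  let z0 : Fin n → ℂ := fun i => (e i : ℂ)
  have hz0 : ∀ i, z0 i ∈ K := fun i => (e i).2
  have hz0i : Function.Injective z0 := fun a b h => Fin.ext (e.injective (Subtype.ext h))
  obtain ⟨z, hz, hmax⟩ := (isCompact_univ_pi fun _ : Fin n => hK).exists_isMaxOn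
    ⟨z0, fun i _ => hz0 i⟩ hcont
  have hzK : ∀ i, z i ∈ K := fun i => hz i trivial
  have hzΦ : 0 < Φ z := ((hpos z0 hz0).mpr hz0i).trans_le (hmax (fun i _ => hz0 i))
  refine ⟨z, (hpos z hzK).mp hzΦ, hzK, fun i w hw => ?_⟩
  have h1 := prod_prod_update (fun a b => ‖blF a b‖) norm_blF_comm z i w
  have h2 := prod_prod_update (fun a b => ‖blF a b‖) norm_blF_comm z i (z i)
  rw [Function.update_eq_self] at h2
  have h3 : Φ (Function.update z i w) ≤ Φ z := by
    apply hmax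
    intro j _
    by_cases hji : j = i
    · subst hji; simpa using hw
    · simpa [Function.update_of_ne hji] using hzK j
  simp only [hΦ] at h3 hzΦ
  rw [h1, h2] at h3
  rw [h2] at hzΦ
  set R := ∏ a ∈ Finset.univ.erase i, ∏ c ∈ (Finset.univ.erase a).erase i, ‖blF (z c) (z a)‖
  have hR : 0 < R := pos_of_mul_pos_right hzΦ (sq_nonneg _)
  have := le_of_mul_le_mul_right h3 hR
  exact le_of_sq_le_sq this (Finset.prod_nonneg fun _ _ => norm_nonneg _)

/-- Extremal Blaschke products: for suitable nodes in `K`, deleting one of them leaves a Blaschke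
product of size `exp (- n V(Ω))`, up to a constant, on `K`. -/
lemma exists_small_blaschke {Ω K : Set ℂ} {ρ : ℝ} (hρ : ρ < 1) (hΩρ : ∀ w ∈ Ω, ‖w‖ ≤ ρ)
    (hΩ : IsOpen Ω) (hK : IsCompact K) (hKΩ : K ⊆ Ω) (hinf : K.Infinite) :
    greenV Ω ≠ ⊤ ∧ ∃ C : ℝ, 0 < C ∧ ∀ n : ℕ, 1 ≤ n → ∃ z : Fin n → ℂ, Function.Injective z ∧
      (∀ i, z i ∈ K) ∧ ∃ i, ∀ w ∈ K, ∏ j ∈ Finset.univ.erase i, ‖blF (z j) w‖ ≤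
        C * Real.exp (-(n * (greenV Ω).toReal)) := by
  obtain ⟨δ₀, hδ₀, hδΩ⟩ := hK.exists_cthickening_subset_open hΩ hKΩ
  obtain ⟨x0, hx0⟩ := hinf.nonempty
  have hρ0 : 0 ≤ ρ := (norm_nonneg _).trans (hΩρ x0 (hKΩ hx0))
  set δ := min δ₀ ((1 - ρ) / 2) with hδdef
  have hδ : 0 < δ := lt_min hδ₀ (by linarith)
  have hδ1 : δ ≤ (1 - ρ) / 2 := min_le_right _ _
  have hball : ∀ c ∈ K, Metric.closedBall c δ ⊆ Ω := fun c hc =>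
    ((Metric.closedBall_subset_closedBall (min_le_left _ _)).trans
      (Metric.closedBall_subset_cthickening hc δ₀)).trans hδΩ
  have hone : ∀ c ∈ K, ‖c‖ + δ < 1 := fun c hc => by linarith [hΩρ c (hKΩ hc)]
  have hL : 0 ≤ Real.log (2 / δ) := Real.log_nonneg (by rw [le_div_iff₀ hδ]; linarith)
  have hVt : greenV Ω ≠ ⊤ := by
    have := sq_mul_greenV_le hδ le_rfl (fun _ : Fin 1 => x0) (fun _ => hball x0 hx0)
      (fun _ => hone x0 hx0)
    simp at this
    exact ne_top_of_le_ne_top ENNReal.ofReal_ne_top this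
  refine ⟨hVt, 2 / δ, by positivity, fun n hn => ?_⟩
  obtain ⟨z, hzi, hzK, hzm⟩ := exists_fekete hK
    (fun w hw => show ‖w‖ < 1 by linarith [hΩρ w (hKΩ hw)]) hinf n
  refine ⟨z, hzi, hzK, ?_⟩
  have h1 := sq_mul_greenV_le hδ hn z (fun i => hball _ (hzK i)) (fun i => hone _ (hzK i))
  have hD : ∀ i, ‖z i‖ < 1 := fun i => by linarith [hone _ (hzK i)]
  have hterm : ∀ i j, (if i = j then ENNReal.ofReal (Real.log (2 / δ)) else greenFnE (z j) (z i))
      = ENNReal.ofReal (if i = j then Real.log (2 / δ) else -Real.log ‖blF (z j) (z i)‖) := by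
    intro i j
    split_ifs with h
    · rfl
    · rw [greenFnE_of_ne (fun h' => h (hzi h').symm), norm_blF_comm]
  have hnn : ∀ i j, 0 ≤ (if i = j then Real.log (2 / δ) else -Real.log ‖blF (z j) (z i)‖) := by
    intro i j
    split_ifs with h
    · exact hL
    · exact neg_log_norm_blF_nonneg (hD i) (hD j)
  simp_rw [hterm] at h1
  simp_rw [← ENNReal.ofReal_sum_of_nonneg (fun j _ => hnn _ j)] at h1
  rw [← ENNReal.ofReal_sum_of_nonneg (fun i _ => Finset.sum_nonneg fun j _ => hnn i j)] at h1
  have h2 := ENNReal.toReal_mono ENNReal.ofReal_ne_top h1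
  rw [ENNReal.toReal_ofReal (Finset.sum_nonneg fun i _ => Finset.sum_nonneg fun j _ => hnn i j),
    ENNReal.toReal_mul, ENNReal.toReal_mul, ENNReal.toReal_natCast] at h2
  have : Nonempty (Fin n) := ⟨⟨0, hn⟩⟩
  obtain ⟨i, -, hi⟩ := Finset.exists_le_of_sum_le (s := (Finset.univ : Finset (Fin n)))
    (f := fun _ => (n : ℝ) * (greenV Ω).toReal) Finset.univ_nonempty
    (by simpa using h2)
  refine ⟨i, fun w hw => (hzm i w hw).trans ?_⟩
  rw [← Finset.add_sum_erase _ _ (Finset.mem_univ i), if_pos rfl] at hi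
  have h3 : ∑ j ∈ Finset.univ.erase i,
      (if i = j then Real.log (2 / δ) else -Real.log ‖blF (z j) (z i)‖) =
      -Real.log (∏ j ∈ Finset.univ.erase i, ‖blF (z j) (z i)‖) := by
    rw [Real.log_prod, ← Finset.sum_neg_distrib]
    · refine Finset.sum_congr rfl fun j hj => ?_
      rw [if_neg (Finset.ne_of_mem_erase hj).symm]
    · intro j hj
      rw [norm_ne_zero_iff, Ne, blF_eq_zero_iff (hD j) (hD i).le]
      exact fun h => (Finset.ne_of_mem_erase hj) (hzi h).symm
  rw [h3] at hi
  have hP : 0 < ∏ j ∈ Finset.univ.erase i, ‖blF (z j) (z i)‖ := by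
    refine Finset.prod_pos fun j hj => ?_
    rw [norm_pos_iff, Ne, blF_eq_zero_iff (hD j) (hD i).le]
    exact fun h => (Finset.ne_of_mem_erase hj) (hzi h).symm
  rw [← Real.exp_log hP, ← Real.exp_log (show 0 < 2 / δ by positivity), ← Real.exp_add]
  apply Real.exp_le_exp.mpr
  linarith

/-! ### The lower bound for products of approximation numbers -/

lemma lintegral_pi_pair {n : ℕ} (μ : Measure ℂ) [IsProbabilityMeasure μ] {i j : Fin n}
    (hij : i ≠ j) :
    ∫⁻ x : Fin n → ℂ, greenFnE (x i) (x j) ∂(Measure.pi fun _ => μ) = greenEnergy μ := by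
  have hind := (ProbabilityTheory.iIndepFun_pi (μ := fun _ : Fin n => μ)
    (X := fun _ => (id : ℂ → ℂ)) (fun _ => aemeasurable_id)).indepFun hij
  have h1 := hind.map_prod_eq_prod_map_map (measurable_pi_apply i).aemeasurable
    (measurable_pi_apply j).aemeasurable
  have hi : ∀ i, Measure.map (fun x : Fin n → ℂ => x i) (Measure.pi fun _ => μ) = μ := fun i =>
    (measurePreserving_eval (fun _ : Fin n => μ) i).map_eq
  change Measure.map (fun x : Fin n → ℂ => (x i, x j)) _ =
    (Measure.map (fun x : Fin n → ℂ => x i) _).prod (Measure.map (fun x : Fin n → ℂ => x j) _) at h1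
  rw [hi, hi] at h1
  have h2 : Measurable fun x : Fin n → ℂ => (x i, x j) :=
    (measurable_pi_apply i).prodMk (measurable_pi_apply j)
  calc ∫⁻ x : Fin n → ℂ, greenFnE (x i) (x j) ∂(Measure.pi fun _ => μ)
      = ∫⁻ q, Function.uncurry greenFnE q ∂(Measure.map (fun x : Fin n → ℂ => (x i, x j))
          (Measure.pi fun _ => μ)) := (lintegral_map measurable_greenFnE h2).symm
    _ = greenEnergy μ := by
        rw [h1, lintegral_prod _ measurable_greenFnE.aemeasurable]; rfl

/-- Random points drawn independently from `μ` have on average the discrete energy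
`n (n - 1) I(μ)`, so some configuration has at most this energy. -/
lemma exists_points_energy_le (μ : Measure ℂ) [IsProbabilityMeasure μ] {K : Set ℂ}
    (h0 : μ Kᶜ = 0) (n : ℕ) : ∃ z : Fin n → ℂ, (∀ i, z i ∈ K) ∧
      ∑ i, ∑ j ∈ Finset.univ.erase i, greenFnE (z i) (z j) ≤
        n * ((n - 1 : ℕ) * greenEnergy μ) := by
  have hm : ∀ i j : Fin n, Measurable fun x : Fin n → ℂ => greenFnE (x i) (x j) := fun i j =>
    show Measurable (Function.uncurry greenFnE ∘ fun x : Fin n → ℂ => (x i, x j)) from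
    measurable_greenFnE.comp ((measurable_pi_apply i).prodMk (measurable_pi_apply j))
  have hN : (Measure.pi fun _ : Fin n => μ) (⋃ i, Function.eval i ⁻¹' Kᶜ) = 0 := by
    refine measure_iUnion_null fun i => ?_
    exact (Measure.quasiMeasurePreserving_eval (fun _ : Fin n => μ) i).preimage_null h0
  obtain ⟨x, hx, hle⟩ := exists_notMem_null_le_lintegral
    (f := fun x : Fin n → ℂ => ∑ i, ∑ j ∈ Finset.univ.erase i, greenFnE (x i) (x j))
    (Finset.measurable_fun_sum _ fun i _ => Finset.measurable_fun_sum _ fun j _ =>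
      hm i j).aemeasurable hN
  refine ⟨x, fun i => ?_, hle.trans (le_of_eq ?_)⟩
  · by_contra h
    exact hx (mem_iUnion.mpr ⟨i, h⟩)
  rw [lintegral_finsetSum _ fun i _ => Finset.measurable_fun_sum _ fun j _ => hm i j]
  simp_rw [lintegral_finsetSum _ fun j _ => hm _ j]
  have : ∀ i : Fin n, ∑ j ∈ Finset.univ.erase i,
      ∫⁻ x : Fin n → ℂ, greenFnE (x i) (x j) ∂(Measure.pi fun _ => μ) =
        (n - 1 : ℕ) * greenEnergy μ := by
    intro i
    rw [Finset.sum_congr rfl fun j hj => lintegral_pi_pair μ (Finset.ne_of_mem_erase hj).symm]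
    simp [Finset.card_erase_of_mem]
  simp [this]

lemma sum_erase_eq_two_mul {n : ℕ} (g : Fin n → Fin n → ℝ) (hg : ∀ i j, g i j = g j i) :
    ∑ i, ∑ j ∈ Finset.univ.erase i, g i j = 2 * ∑ i, ∑ j ∈ Finset.Iio i, g j i := by
  have h1 : ∀ i : Fin n, ∑ j ∈ Finset.univ.erase i, g i j =
      ∑ j ∈ Finset.Iio i, g i j + ∑ j ∈ Finset.Ioi i, g i j := by
    intro i
    rw [← Finset.sum_union]
    · congr 1
      ext j
      simp only [Finset.mem_erase, Finset.mem_univ, and_true, Finset.mem_union, Finset.mem_Iio,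
        Finset.mem_Ioi]
      exact ne_iff_lt_or_gt
    · rw [Finset.disjoint_left]
      intro j hj hj'
      exact absurd (Finset.mem_Iio.mp hj) (not_lt_of_gt (Finset.mem_Ioi.mp hj'))
  have h2 : ∑ i, ∑ j ∈ Finset.Ioi i, g i j = ∑ i, ∑ j ∈ Finset.Iio i, g j i :=
    Finset.sum_comm' (by simp)
  rw [Finset.sum_congr rfl fun i _ => h1 i, Finset.sum_add_distrib, h2, two_mul]
  congr 1
  exact Finset.sum_congr rfl fun i _ => Finset.sum_congr rfl fun j _ => hg i j

/-- A compact set covered by an increasing family `U r`, `r < 1`, of open sets lies in one of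
them. -/
lemma exists_radius_subset {K : Set ℂ} (hK : IsCompact K) {U : ℝ → Set ℂ} (hmono : Monotone U)
    (hopen : ∀ r < 1, IsOpen (U r)) (hcov : ∀ x ∈ K, ∃ r < 1, x ∈ U r) :
    ∃ r : ℝ, 0 ≤ r ∧ r < 1 ∧ K ⊆ U r := by
  let u : ℕ → ℝ := fun m => 1 - 1 / ((m : ℝ) + 1)
  have hu : Monotone u := fun m m' h => by
    have : (m : ℝ) ≤ m' := by exact_mod_cast h
    simp only [u]
    gcongr
  have hu1 : ∀ m, u m < 1 := fun m => by
    have : 0 < 1 / ((m : ℝ) + 1) := by positivity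
    simp only [u]; linarith
  obtain ⟨m, hm⟩ := hK.elim_directed_cover (fun m => U (u m)) (fun m => hopen _ (hu1 m)) (by
      intro x hx
      obtain ⟨r, hr, hxr⟩ := hcov x hx
      obtain ⟨m, hm⟩ := exists_nat_one_div_lt (sub_pos.mpr hr)
      exact mem_iUnion.mpr ⟨m, hmono (by simp only [u]; linarith) hxr⟩)
    (Monotone.directed_le fun m m' h => hmono (hu h))
  refine ⟨u m, ?_, hu1 m, hm⟩
  simp only [u, sub_nonneg]
  rw [div_le_one (by positivity)]
  linarith [Nat.cast_nonneg (α := ℝ) m]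

/-- Product lower bound: on a triangular array of Blaschke products evaluated at points with
small discrete energy the determinant is at least `exp (- b n² / 2)`, and the determinant
inequality turns this into a bound for the product of the first `n` approximation numbers. -/
lemma exp_le_prod_approxNumber
    {p : ℝ} (hp : 1 ≤ p)
    {X : Type} [NormedAddCommGroup X] [NormedSpace ℂ X]
    (ι : X →ₗ[ℂ] (ℂ → ℂ))
    (hι_mem : ∀ g : X, memHp p (ι g))
    (hι_norm : ∀ g : X, ‖g‖ = hpNorm p (ι g))
    (hι_surj : ∀ f : ℂ → ℂ, memHp p f → ∃ g : X, ∀ z ∈ unitDisk, ι g z = f z)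
    {φ : ℂ → ℂ}
    (hφ_maps : Set.MapsTo φ unitDisk unitDisk)
    (hφ_open : ∀ s ⊆ unitDisk, IsOpen s → IsOpen (φ '' s))
    (Cφ : X →L[ℂ] X)
    (hCφ : ∀ g : X, ∀ z ∈ unitDisk, ι (Cφ g) z = ι g (φ z))
    {b : ℝ} (hb : greenV (φ '' unitDisk) < ENNReal.ofReal b) :
    ∃ C : ℝ, 0 < C ∧ ∀ n : ℕ, Real.exp (-(b * n ^ 2 / 2)) ≤
      (C * n ^ 2) ^ n * ∏ k : Fin n, approxNumber Cφ (k + 1) := by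
  have hb0 : 0 < b := by
    by_contra h
    rw [ENNReal.ofReal_of_nonpos (not_lt.mp h)] at hb
    exact not_lt_zero hb
  simp only [greenV, iInf_lt_iff] at hb
  obtain ⟨μ, hμ, ⟨K, hKΩ, hKc, hK0⟩, hI⟩ := hb
  -- the compact set `K` is already covered by the image of a smaller disc
  obtain ⟨r, hr0, hr1, hr⟩ := exists_radius_subset hKc (U := fun r => φ '' Metric.ball 0 r)
    (fun a b hab => image_mono (Metric.ball_subset_ball hab))
    (fun r hr => hφ_open _ (by rw [unitDisk_eq_ball]; exact Metric.ball_subset_ball hr.le)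
      Metric.isOpen_ball)
    (fun w hw => by
      obtain ⟨ζ, hζ, rfl⟩ := hKΩ hw
      obtain ⟨r, hr, hr'⟩ := exists_between (show ‖ζ‖ < 1 from hζ)
      exact ⟨r, hr', ζ, mem_ball_zero_iff.mpr hr, rfl⟩)
  refine ⟨2 / (1 - r), div_pos two_pos (by linarith), fun n => ?_⟩
  obtain ⟨w, hwK, hwE⟩ := exists_points_energy_le μ hK0 n
  choose ζ hζr hζw using fun i => hr (hwK i)
  have hζ : ∀ i, ‖ζ i‖ < r := fun i => by simpa using hζr i
  have hζD : ∀ i, ζ i ∈ unitDisk := fun i => (hζ i).trans hr1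
  have hwD : ∀ i, ‖w i‖ < 1 := fun i => by rw [← hζw i]; exact hφ_maps (hζD i)
  have hBd : ∀ j, DifferentiableOn ℂ (fun z => ∏ l ∈ Finset.Iio j, blF (w l) z) unitDisk := by
    intro j
    exact DifferentiableOn.fun_finsetProd fun l _ => differentiableOn_blF (hwD l)
  have hBn : ∀ j, ∀ z ∈ unitDisk, ‖∏ l ∈ Finset.Iio j, blF (w l) z‖ ≤ 1 := by
    intro j z hz
    rw [norm_prod]
    exact Finset.prod_le_one (fun _ _ => norm_nonneg _) fun l _ => norm_blF_le_one (hwD l) (le_of_lt hz)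
  choose x hx using fun j => hι_surj _ (memHp_of_bounded hp (hBd j) (hBn j))
  have hxn : ∀ j, ‖x j‖ ≤ 1 := by
    intro j
    rw [hι_norm]
    refine hpNorm_le_of_bounded hp (hι_mem _).1 fun z hz => ?_
    rw [hx j z hz]
    exact hBn j z hz
  let y : Fin n → X →ₗ[ℂ] ℂ := fun i => (LinearMap.proj (ζ i)).comp ι
  have hy : ∀ i v, ‖y i v‖ ≤ 2 / (1 - r) * ‖v‖ := by
    intro i v
    have h1 := norm_le_of_memHp hp (hι_mem v) (hζD i)
    rw [← hι_norm] at h1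
    refine h1.trans ?_
    gcongr
    · linarith [hζ i]
  have hdet := norm_det_le Cφ x y (div_nonneg zero_le_two (by linarith)) hxn hy
  have hent : ∀ i j, y i (Cφ (x j)) = ∏ l ∈ Finset.Iio j, blF (w l) (w i) := by
    intro i j
    change ι (Cφ (x j)) (ζ i) = _
    rw [hCφ _ _ (hζD i), hx j _ (hφ_maps (hζD i)), hζw i]
  have htri : (Matrix.of fun i j => y i (Cφ (x j))).det =
      ∏ i, ∏ l ∈ Finset.Iio i, blF (w l) (w i) := by
    rw [Matrix.det_of_isLowerTriangular]
    · exact Finset.prod_congr rfl fun i _ => by rw [Matrix.of_apply, hent]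
    · intro i j hij
      have hij' : i < j := hij
      rw [Matrix.of_apply, hent]
      refine Finset.prod_eq_zero (Finset.mem_Iio.mpr hij') ?_
      rw [blF_eq_zero_iff (hwD i) (hwD i).le]
  -- the determinant is the product of `|blF (w j) (w i)|` over `j < i`, that is, the exponential of
  -- minus half the discrete energy of the points `w i`
  have hsum_top : ∑ i, ∑ j ∈ Finset.univ.erase i, greenFnE (w i) (w j) ≠ ⊤ := by
    refine ne_top_of_le_ne_top ?_ hwE
    exact ENNReal.mul_ne_top (ENNReal.natCast_ne_top _)
      (ENNReal.mul_ne_top (ENNReal.natCast_ne_top _) hI.ne_top)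
  have hg_top : ∀ i, ∀ j ∈ Finset.univ.erase i, greenFnE (w i) (w j) ≠ ⊤ := by
    intro i j hj
    exact ENNReal.sum_ne_top.mp (ENNReal.sum_ne_top.mp hsum_top i (Finset.mem_univ i)) j hj
  have hexp : ∀ i j, j < i → ‖blF (w j) (w i)‖ = Real.exp (-(greenFnE (w j) (w i)).toReal) := by
    intro i j hij
    have hne : w j ≠ w i := by
      intro h
      apply hg_top j i (by simp [hij.ne'])
      rw [h, greenFnE_self]
    rw [greenFnE_of_ne hne, ENNReal.toReal_ofReal (neg_log_norm_blF_nonneg (hwD j) (hwD i)), neg_neg,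
      Real.exp_log, norm_blF_comm]
    rw [norm_pos_iff, Ne, blF_eq_zero_iff (hwD i) (hwD j).le]
    exact hne
  have hdet_eq : ‖(Matrix.of fun i j => y i (Cφ (x j))).det‖ =
      Real.exp (-∑ i, ∑ j ∈ Finset.Iio i, (greenFnE (w j) (w i)).toReal) := by
    rw [htri, norm_prod, ← Finset.sum_neg_distrib, Real.exp_sum]
    refine Finset.prod_congr rfl fun i _ => ?_
    rw [norm_prod, ← Finset.sum_neg_distrib, Real.exp_sum]
    exact Finset.prod_congr rfl fun j hj => hexp i j (Finset.mem_Iio.mp hj)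
  have hhalf := sum_erase_eq_two_mul (fun i j => (greenFnE (w i) (w j)).toReal)
    (fun i j => by rw [greenFnE_comm])
  have hEreal : ∑ i, ∑ j ∈ Finset.univ.erase i, (greenFnE (w i) (w j)).toReal ≤ n * (n * b) := by
    have h1 : ∑ i, ∑ j ∈ Finset.univ.erase i, greenFnE (w i) (w j) ≤
        ENNReal.ofReal (n * (n * b)) := by
      rw [ENNReal.ofReal_mul (by positivity), ENNReal.ofReal_mul (by positivity),
        ENNReal.ofReal_natCast]
      refine hwE.trans ?_
      gcongr
      omega
    have h2 := ENNReal.toReal_mono ENNReal.ofReal_ne_top h1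
    rw [ENNReal.toReal_ofReal (by positivity), ENNReal.toReal_sum] at h2
    · rw [Finset.sum_congr rfl fun i _ => (ENNReal.toReal_sum (hg_top i)).symm]
      exact h2
    · exact fun i _ => ENNReal.sum_ne_top.mpr (hg_top i)
  calc Real.exp (-(b * n ^ 2 / 2))
      ≤ Real.exp (-∑ i, ∑ j ∈ Finset.Iio i, (greenFnE (w j) (w i)).toReal) := by
        apply Real.exp_le_exp.mpr
        rw [hhalf] at hEreal
        nlinarith
    _ ≤ n.factorial * ∏ k : Fin n, (2 / (1 - r) * (approxNumber Cφ (k + 1) * (n * 1))) := by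
        rw [← hdet_eq]; exact hdet
    _ = n.factorial * ((2 / (1 - r) * n) ^ n * ∏ k : Fin n, approxNumber Cφ (k + 1)) := by
        congr 1
        have : ∀ k : Fin n, 2 / (1 - r) * (approxNumber Cφ (k + 1) * (n * 1)) =
            (2 / (1 - r) * n) * approxNumber Cφ (k + 1) := fun k => by ring
        rw [Finset.prod_congr rfl fun k _ => this k, Finset.prod_mul_distrib]
        simp
    _ ≤ (n : ℝ) ^ n * ((2 / (1 - r) * n) ^ n * ∏ k : Fin n, approxNumber Cφ (k + 1)) := by
        gcongr
        · refine mul_nonneg (pow_nonneg (mul_nonneg (div_nonneg zero_le_two (by linarith))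
            (Nat.cast_nonneg _)) _) (Finset.prod_nonneg fun k _ => approxNumber_nonneg _ _)
        · exact_mod_cast Nat.factorial_le_pow n
    _ = _ := by rw [← mul_assoc, ← mul_pow]; ring

/-! ### Interpolation operators -/

/-- Approximation of `C_φ` by interpolation at the nodes `v i`: the error is controlled by the size
of the Blaschke product of the nodes on `φ(D)`. -/
lemma approxNumber_le_of_blaschke
    {p : ℝ} (hp : 1 ≤ p)
    {X : Type} [NormedAddCommGroup X] [NormedSpace ℂ X]
    (ι : X →ₗ[ℂ] (ℂ → ℂ))
    (hι_mem : ∀ g : X, memHp p (ι g))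
    (hι_norm : ∀ g : X, ‖g‖ = hpNorm p (ι g))
    (hι_surj : ∀ f : ℂ → ℂ, memHp p f → ∃ g : X, ∀ z ∈ unitDisk, ι g z = f z)
    {φ : ℂ → ℂ}
    (hφ_diff : DifferentiableOn ℂ φ unitDisk)
    (Cφ : X →L[ℂ] X)
    (hCφ : ∀ g : X, ∀ z ∈ unitDisk, ι (Cφ g) z = ι g (φ z))
    {ρ : ℝ} (hρ0 : 0 ≤ ρ) (hρ : ρ < 1) (hφρ : ∀ z ∈ unitDisk, ‖φ z‖ ≤ ρ)
    {κ : Type*} [DecidableEq κ] {s : Finset κ} (hs : s.Nonempty) {v : κ → ℂ} (hv : InjOn v s)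
    (hvρ : ∀ i ∈ s, ‖v i‖ ≤ ρ) {n : ℕ} (hn : s.card + 1 = n) {M : ℝ} (hM0 : 0 ≤ M)
    (hM : ∀ z ∈ unitDisk, ‖∏ i ∈ s, blF (v i) (φ z)‖ ≤ M) :
    approxNumber Cφ n ≤ 32 / (1 - ρ) ^ 3 * n * M := by
  have := Classical.decEq X
  have h1ρ : 0 < 1 - ρ := by linarith
  have hn1 : 1 ≤ n := by omega
  have hn1' : (1 : ℝ) ≤ n := by exact_mod_cast hn1
  have hvD : ∀ i ∈ s, ‖v i‖ < 1 := fun i hi => (hvρ i hi).trans_lt hρ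
  set D : ℂ → ℂ := fun z => ∏ i ∈ s, (1 - (starRingEnd ℂ) (v i) * z) with hD
  have hDd : Differentiable ℂ D := by
    refine Differentiable.fun_finsetProd fun i _ => ?_
    fun_prop
  have hD0 : ∀ z, ‖z‖ ≤ 1 → D z ≠ 0 := fun z hz =>
    Finset.prod_ne_zero_iff.mpr fun i hi => one_sub_conj_mul_ne_zero (hvD i hi) hz
  have hBD : ∀ z, ∏ i ∈ s, blF (v i) z = (∏ i ∈ s, (z - v i)) / D z := fun z => by
    rw [hD]; exact Finset.prod_div_distrib ..
  -- the basis functions of the finite rank operator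
  set h : κ → ℂ → ℂ := fun i z => D (v i) * (Lagrange.basis s v i).eval z / D z with hh
  have hhd : ∀ i z, ‖z‖ ≤ 1 → DifferentiableAt ℂ (h i) z := fun i z hz =>
    DifferentiableAt.div ((differentiableAt_const _).mul (Polynomial.differentiable _ _))
      (hDd z) (hD0 z hz)
  have hφD : ∀ z ∈ unitDisk, ‖φ z‖ < 1 := fun z hz => (hφρ z hz).trans_lt hρ
  have hhφ : ∀ i, ∃ e : X, ∀ z ∈ unitDisk, ι e z = h i (φ z) := by
    intro i
    have hc : ContinuousOn (h i) (Metric.closedBall 0 ρ) := fun z hz =>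
      (hhd i z ((mem_closedBall_zero_iff.mp hz).trans hρ.le)).continuousAt.continuousWithinAt
    obtain ⟨B, hB⟩ := (isCompact_closedBall (0 : ℂ) ρ).exists_bound_of_continuousOn hc
    refine hι_surj _ (memHp_of_bounded (M := B) hp ?_ fun z hz => ?_)
    · intro z hz
      exact (hhd i _ (hφD z hz).le).comp_differentiableWithinAt z (hφ_diff z hz)
    · exact hB _ (mem_closedBall_zero_iff.mpr (hφρ z hz))
  choose e he using hhφ
  let ev : κ → X →ₗ[ℂ] ℂ := fun i => (LinearMap.proj (v i)).comp ι
  have hev : ∀ i ∈ s, ∀ g : X, ‖ev i g‖ ≤ 2 / (1 - ‖v i‖) * ‖g‖ := fun i hi g => by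
    rw [hι_norm]; exact norm_le_of_memHp hp (hι_mem g) (hvD i hi)
  let R : X →L[ℂ] X := ∑ i ∈ s.attach,
    ((ev i).mkContinuous (2 / (1 - ‖v i‖)) (hev i i.2)).smulRight (e i)
  have hRg : ∀ g, R g = ∑ i ∈ s, ι g (v i) • e i := by
    intro g
    rw [← Finset.sum_attach]
    simp [R, ev]
  have hrank : Module.rank ℂ (LinearMap.range (R : X →ₗ[ℂ] X)) < (n : Cardinal) := by
    have hsub : LinearMap.range (R : X →ₗ[ℂ] X) ≤
        Submodule.span ℂ ((s.image e : Finset X) : Set X) := by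
      rintro _ ⟨g, rfl⟩
      change R g ∈ _
      rw [hRg]
      refine Submodule.sum_mem _ fun i hi => Submodule.smul_mem _ _ (Submodule.subset_span ?_)
      exact Finset.mem_coe.mpr (Finset.mem_image_of_mem e hi)
    calc Module.rank ℂ (LinearMap.range (R : X →ₗ[ℂ] X))
        ≤ Module.rank ℂ (Submodule.span ℂ ((s.image e : Finset X) : Set X)) :=
          Submodule.rank_mono hsub
      _ ≤ (s.image e).card := rank_span_finset_le _
      _ ≤ s.card := by exact_mod_cast Finset.card_image_le
      _ < n := by exact_mod_cast (by omega : s.card < n)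
  refine (approxNumber_le Cφ R n hrank).trans ?_
  refine ContinuousLinearMap.opNorm_le_bound _ (by positivity) fun g => ?_
  rw [hι_norm ((Cφ - R) g)]
  refine hpNorm_le_of_bounded hp (hι_mem _).1 fun z hz => ?_
  set w := φ z with hw
  have hwρ : ‖w‖ ≤ ρ := hφρ z hz
  set F : ℂ → ℂ := fun ζ => ι g ζ * D ζ with hF
  have hval : ι ((Cφ - R) g) z =
      (F w - (Lagrange.interpolate s v fun i => F (v i)).eval w) / D w := by
    have hRz : ι (R g) z = (Lagrange.interpolate s v fun i => F (v i)).eval w / D w := by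
      rw [hRg, map_sum, Finset.sum_apply, Lagrange.interpolate_apply, Polynomial.eval_finsetSum,
        Finset.sum_div]
      refine Finset.sum_congr rfl fun i _ => ?_
      rw [map_smul, Pi.smul_apply, he i z hz, smul_eq_mul, Polynomial.eval_mul,
        Polynomial.eval_C, hh, hF]
      ring
    rw [sub_apply, map_sub, Pi.sub_apply, hCφ g z hz, hRz, sub_div]
    congr 1
    rw [hF, mul_div_cancel_right₀ _ (hD0 w (by linarith))]
  -- the contour has radius `1 - O(1 / n)`, where the Blaschke product is bounded below
  set τ := (1 - ρ) ^ 2 / 4 with hτ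
  have hτ0 : 0 < τ := by positivity
  have hτn : 0 < τ / n := by positivity
  have hτn' : τ / n ≤ τ := div_le_self hτ0.le hn1'
  have hτρ : τ ≤ (1 - ρ) / 4 := by rw [hτ]; nlinarith
  set R' := 1 - τ / n with hR'
  have hR'1 : R' < 1 := by linarith
  have hR'0 : 0 < R' := by linarith
  have hcb : Metric.closedBall (0 : ℂ) R' ⊆ unitDisk := fun ζ hζ =>
    (mem_closedBall_zero_iff.mp hζ).trans_lt hR'1
  have hFd : DifferentiableOn ℂ F unitDisk := (hι_mem g).1.mul hDd.differentiableOn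
  have herr := norm_sub_interpolate_le hs hv isOpen_unitDisk hFd hR'0 hcb
    (fun i hi => by rw [mem_ball_zero_iff]; linarith [hvρ i hi]) (z := w) (d := (1 - ρ) / 2)
    (A := 4 * n / τ * ‖g‖) (by linarith) (by rw [dist_zero_right]; linarith) (by
      intro ζ hζ
      have hζ' : ‖ζ‖ = R' := by simpa using hζ
      have hζ1 : ‖ζ‖ < 1 := by linarith
      have h1 := norm_le_of_memHp hp (hι_mem g) hζ1
      rw [← hι_norm, hζ'] at h1
      have h2 : 1 / 2 ≤ ‖∏ i ∈ s, blF (v i) ζ‖ :=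
        half_le_norm_prod_blF hρ hvρ hn1 (by omega) hζ' hρ0
      rw [hBD, norm_div, le_div_iff₀ (norm_pos_iff.mpr (hD0 ζ hζ1.le)),
        norm_prod s fun i => ζ - v i] at h2
      have h3 : 2 / (1 - R') = 2 * n / τ := by
        rw [hR', sub_sub_cancel, div_div_eq_mul_div]
      rw [h3] at h1
      calc ‖F ζ‖ = ‖ι g ζ‖ * ‖D ζ‖ := norm_mul _ _
        _ ≤ (2 * n / τ * ‖g‖) * (2 * ∏ i ∈ s, ‖ζ - v i‖) := by
            gcongr
            linarith
        _ = _ := by ring)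
  have hDw : 0 < ‖D w‖ := norm_pos_iff.mpr (hD0 w (by linarith))
  have hMw := hM z hz
  rw [hBD, norm_div, norm_prod s fun i => w - v i] at hMw
  rw [hval, norm_div]
  calc ‖F w - (Lagrange.interpolate s v fun i => F (v i)).eval w‖ / ‖D w‖
      ≤ ((∏ i ∈ s, ‖w - v i‖) * (R' * (4 * n / τ * ‖g‖) / ((1 - ρ) / 2))) / ‖D w‖ := by gcongr
    _ = ((∏ i ∈ s, ‖w - v i‖) / ‖D w‖) * (R' * (4 * n / τ * ‖g‖) / ((1 - ρ) / 2)) := by ring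
    _ ≤ M * (1 * (4 * n / τ * ‖g‖) / ((1 - ρ) / 2)) := by gcongr
    _ = 32 / (1 - ρ) ^ 3 * n * M * ‖g‖ := by
        rw [hτ]
        field_simp
        ring

/-! ### The upper bound for approximation numbers -/

/-- Upper bound `aₙ(C_φ) ≤ C n exp (- n (V(φ(D)) - ε))`. The extremal Blaschke products for the
compact connected set `φ(r D̄)` stay small on all of `φ(D)` when `r` is close to `1`, because each
point of `φ(D)` is then very close to that connected set. -/
lemma exists_approxNumber_le
    {p : ℝ} (hp : 1 ≤ p)
    {X : Type} [NormedAddCommGroup X] [NormedSpace ℂ X]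
    (ι : X →ₗ[ℂ] (ℂ → ℂ))
    (hι_mem : ∀ g : X, memHp p (ι g))
    (hι_norm : ∀ g : X, ‖g‖ = hpNorm p (ι g))
    (hι_surj : ∀ f : ℂ → ℂ, memHp p f → ∃ g : X, ∀ z ∈ unitDisk, ι g z = f z)
    {φ : ℂ → ℂ}
    (hφ_diff : DifferentiableOn ℂ φ unitDisk)
    (hφ_clos : closure (φ '' unitDisk) ⊆ unitDisk)
    (hφ_open : ∀ s ⊆ unitDisk, IsOpen s → IsOpen (φ '' s))
    {z₁ : ℂ} (hz₁ : z₁ ∈ unitDisk) (hφz₁ : φ z₁ ≠ φ 0)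
    (Cφ : X →L[ℂ] X)
    (hCφ : ∀ g : X, ∀ z ∈ unitDisk, ι (Cφ g) z = ι g (φ z)) :
    greenV (φ '' unitDisk) ≠ ⊤ ∧ ∀ ε : ℝ, 0 < ε → ∃ C : ℝ, 0 < C ∧ ∀ n : ℕ, 2 ≤ n →
      approxNumber Cφ n ≤ C * n * Real.exp (-(n * ((greenV (φ '' unitDisk)).toReal - ε))) := by
  set Ω := φ '' unitDisk with hΩ
  set V := (greenV Ω).toReal with hV
  have hV0 : 0 ≤ V := ENNReal.toReal_nonneg
  have h0D : (0 : ℂ) ∈ unitDisk := by simp [unitDisk]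
  -- a disc of radius `ρ < 1` containing the image
  have hcc : IsCompact (closure Ω) := by
    refine Metric.isCompact_of_isClosed_isBounded isClosed_closure ?_
    refine (Metric.isBounded_ball (x := (0 : ℂ)) (r := 1)).subset ?_
    rw [← unitDisk_eq_ball]; exact hφ_clos
  obtain ⟨wm, hwm, hmax⟩ := hcc.exists_isMaxOn ⟨φ 0, subset_closure ⟨0, h0D, rfl⟩⟩
    continuous_norm.continuousOn
  set ρ := ‖wm‖ with hρdef
  have hρ0 : 0 ≤ ρ := norm_nonneg _
  have hρ : ρ < 1 := hφ_clos hwm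
  have hΩρ : ∀ w ∈ Ω, ‖w‖ ≤ ρ := fun w hw => hmax (subset_closure hw)
  have hΩo : IsOpen Ω := hφ_open _ le_rfl isOpen_unitDisk
  set c := dist (φ z₁) (φ 0) / 2 with hc
  have hc0 : 0 < c := half_pos (dist_pos.mpr hφz₁)
  -- the compact connected sets `φ(r D̄)`
  have key : ∀ R : ℝ, 0 < R → ∃ E : Set ℂ, IsCompact E ∧ E ⊆ Ω ∧ IsPreconnected E ∧ φ 0 ∈ E ∧
      φ z₁ ∈ E ∧ ∀ w ∈ Ω, ∃ x ∈ E, dist w x ≤ R := by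
    intro R hR
    obtain ⟨r, hr0, hr1, hr⟩ := exists_radius_subset hcc
      (U := fun r => Metric.thickening R (φ '' (Metric.ball 0 r)))
      (fun a b hab => Metric.thickening_subset_of_subset R
        (image_mono (Metric.ball_subset_ball hab)))
      (fun r _ => Metric.isOpen_thickening)
      (fun x hx => by
        obtain ⟨y, ⟨ζ, hζ, rfl⟩, hy⟩ := Metric.mem_closure_iff.mp hx R hR
        obtain ⟨r, hr, hr'⟩ := exists_between (show ‖ζ‖ < 1 from hζ)
        exact ⟨r, hr', Metric.mem_thickening_iff.mpr
          ⟨φ ζ, ⟨ζ, mem_ball_zero_iff.mpr hr, rfl⟩, hy⟩⟩)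
    set r' := max r ‖z₁‖ with hr'
    have hr'1 : r' < 1 := max_lt hr1 hz₁
    have hr'0 : 0 ≤ r' := hr0.trans (le_max_left _ _)
    have hsub : Metric.closedBall (0 : ℂ) r' ⊆ unitDisk := fun z hz =>
      (mem_closedBall_zero_iff.mp hz).trans_lt hr'1
    have hcont := hφ_diff.continuousOn.mono hsub
    refine ⟨φ '' Metric.closedBall 0 r', (isCompact_closedBall _ _).image_of_continuousOn hcont,
      image_mono hsub, (convex_closedBall _ _).isPreconnected.image _ hcont,
      mem_image_of_mem _ (Metric.mem_closedBall_self hr'0),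
      mem_image_of_mem _ (mem_closedBall_zero_iff.mpr (le_max_right _ _)), fun w hw => ?_⟩
    obtain ⟨x, hx, hwx⟩ := Metric.mem_thickening_iff.mp (hr (subset_closure hw))
    exact ⟨x, image_mono (Metric.ball_subset_closedBall.trans
      (Metric.closedBall_subset_closedBall (le_max_left _ _))) hx, hwx.le⟩
  have hinf : ∀ E : Set ℂ, IsPreconnected E → φ 0 ∈ E → φ z₁ ∈ E → E.Infinite :=
    fun E hE h0 h1 => hE.infinite_of_nontrivial ⟨_, h0, _, h1, hφz₁.symm⟩
  constructor
  · obtain ⟨E, hEc, hEΩ, hEp, h0, h1, -⟩ := key 1 one_pos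
    exact (exists_small_blaschke hρ hΩρ hΩo hEc hEΩ (hinf E hEp h0 h1)).1
  intro ε hε
  set η := ε / Real.log 12 with hη
  have hlog : 0 < Real.log 12 := Real.log_pos (by norm_num)
  have hη0 : 0 < η := div_pos hε hlog
  set s := (1 - ρ) / 2 with hs
  have hs0 : 0 < s := half_pos (by linarith)
  set R := min c (min (s / 2) (s / 4 * Real.exp (-(V / η)))) with hR
  have hR0 : 0 < R := lt_min hc0 (lt_min (by positivity) (by positivity))
  have hRc : R ≤ c := min_le_left _ _
  have hRs : R ≤ s / 2 := (min_le_right _ _).trans (min_le_left _ _)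
  have hRe : R ≤ s / 4 * Real.exp (-(V / η)) := (min_le_right _ _).trans (min_le_right _ _)
  obtain ⟨E, hEc, hEΩ, hEp, h0E, h1E, hdense⟩ := key R hR0
  obtain ⟨-, C, hC0, hF⟩ := exists_small_blaschke hρ hΩρ hΩo hEc hEΩ (hinf E hEp h0E h1E)
  refine ⟨32 / (1 - ρ) ^ 3 * (C * 12 + 2), ?_, fun n hn => ?_⟩
  · have : 0 < 1 - ρ := by linarith
    positivity
  obtain ⟨v, hvi, hvE, i₀, hsmall⟩ := hF n (by omega)
  set S := Finset.univ.erase i₀ with hS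
  have hScard : S.card + 1 = n := by
    rw [hS, Finset.card_erase_of_mem (Finset.mem_univ _), Finset.card_univ, Fintype.card_fin]
    omega
  have hvρ : ∀ i, ‖v i‖ ≤ ρ := fun i => hΩρ _ (hEΩ (hvE i))
  have hvD : ∀ i, ‖v i‖ < 1 := fun i => (hvρ i).trans_lt hρ
  -- propagation of smallness from `E` to `Ω`
  have hB : ∀ w ∈ Ω, ‖∏ j ∈ S, blF (v j) w‖ ≤ (C * 12 + 2) * Real.exp (-(n * (V - ε))) := by
    intro w hw
    obtain ⟨x, hx, hwx⟩ := hdense w hw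
    obtain ⟨q, hqE, hq⟩ : ∃ q ∈ E, R ≤ dist q x := by
      by_contra! hcon
      have h1 := hcon _ h0E
      have h2 := hcon _ h1E
      have h3 := dist_triangle_right (φ z₁) (φ 0) x
      linarith
    set k := ⌈η * n⌉₊ with hk
    have hn0 : (0 : ℝ) < n := by exact_mod_cast (by omega : 0 < n)
    have hk1 : 1 ≤ k := Nat.one_le_iff_ne_zero.mpr (Nat.ceil_pos.mpr (by positivity)).ne'
    have hkl : η * n ≤ k := Nat.le_ceil _
    have hku : (k : ℝ) < η * n + 1 := Nat.ceil_lt_add_one (by positivity)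
    have hd : DifferentiableOn ℂ (fun z => ∏ j ∈ S, blF (v j) z) unitDisk :=
      DifferentiableOn.fun_finsetProd fun l _ => differentiableOn_blF (hvD l)
    have hsU : Metric.closedBall x s ⊆ unitDisk := by
      intro y hy
      rw [mem_closedBall_iff_norm] at hy
      change ‖y‖ < 1
      linarith [norm_le_norm_add_norm_sub' y x, hΩρ x (hEΩ hx)]
    have hprop := norm_le_of_small_on_connected hEp hx hqE hR0 (by linarith) hq isOpen_unitDisk hd
      hsU (fun z hz => by
        rw [norm_prod]
        exact Finset.prod_le_one (fun _ _ => norm_nonneg _) fun l _ =>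
          norm_blF_le_one (hvD l) (le_of_lt (hsU hz)))
      (fun z hz => by rw [norm_prod]; exact hsmall z hz) hwx hk1
    have h12 : (12 : ℝ) ^ k ≤ 12 * Real.exp (n * ε) := by
      have : (12 : ℝ) ^ k = Real.exp (k * Real.log 12) := by
        rw [Real.exp_nat_mul, Real.exp_log (by norm_num)]
      rw [this]
      calc Real.exp (k * Real.log 12) ≤ Real.exp ((η * n + 1) * Real.log 12) := by gcongr
        _ = Real.exp (Real.log 12 + n * ε) := by
            congr 1
            rw [hη]; field_simp; ring
        _ = _ := by rw [Real.exp_add, Real.exp_log (by norm_num)]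
    have hgeo : (4 * R / s) ^ (k + 1) ≤ Real.exp (-(n * V)) := by
      have h1 : 4 * R / s ≤ Real.exp (-(V / η)) := by
        rw [div_le_iff₀ hs0]; linarith
      calc (4 * R / s) ^ (k + 1) ≤ Real.exp (-(V / η)) ^ (k + 1) := by gcongr
        _ = Real.exp (-((k + 1) * (V / η))) := by
            rw [← Real.exp_nat_mul]; push_cast; ring_nf
        _ ≤ Real.exp (-(n * V)) := by
            apply Real.exp_le_exp.mpr
            have h2 : (η * n) * (V / η) ≤ (k + 1) * (V / η) := by
              gcongr
              linarith
            have h3 : (η * n) * (V / η) = n * V := by field_simp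
            linarith
    have hexp : Real.exp (-(n * (V - ε))) = Real.exp (-(n * V)) * Real.exp (n * ε) := by
      rw [← Real.exp_add]; ring_nf
    have he1 : 1 ≤ Real.exp (n * ε) := Real.one_le_exp (by positivity)
    calc ‖∏ j ∈ S, blF (v j) w‖
        ≤ C * Real.exp (-(n * V)) * 12 ^ k + 2 * (4 * R / s) ^ (k + 1) := hprop
      _ ≤ C * Real.exp (-(n * V)) * (12 * Real.exp (n * ε)) + 2 * (Real.exp (-(n * V)) * 1) := by
          rw [mul_one]; gcongr
      _ ≤ C * Real.exp (-(n * V)) * (12 * Real.exp (n * ε))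
          + 2 * (Real.exp (-(n * V)) * Real.exp (n * ε)) := by gcongr
      _ = _ := by rw [hexp]; ring
  have := approxNumber_le_of_blaschke hp ι hι_mem hι_norm hι_surj hφ_diff Cφ hCφ hρ0 hρ
    (fun z hz => hΩρ _ ⟨z, hz, rfl⟩) (s := S) (Finset.card_pos.mp (by omega)) hvi.injOn
    (fun i _ => hvρ i) hScard (by positivity) (fun z hz => hB _ ⟨z, hz, rfl⟩)
  refine this.trans (le_of_eq ?_)
  ring

/-! ### Passage to the limit -/

/-- A Tauberian step: for an antitone sequence `x`, an upper bound `x n ≤ -v n + o(n)` and a lower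
bound `∑ k ≤ n, x k ≥ -v n² / 2 - o(n²)` force `x n / n → -v`. If `x n` were much smaller than
`-v n`, so would be all the `x k` with `n ≤ k ≤ (1 + η) n`, which spoils the lower bound at
`(1 + η) n`. -/
lemma tendsto_div_of_sum_bounds {x : ℕ → ℝ} {v : ℝ} (hv : 0 ≤ v)
    (hanti : ∀ m n : ℕ, 1 ≤ m → m ≤ n → x n ≤ x m)
    (hU : ∀ ε : ℝ, 0 < ε → ∃ D : ℝ, 0 ≤ D ∧ ∀ n : ℕ, 1 ≤ n → x n ≤ D - n * (v - ε))
    (hL : ∀ ε : ℝ, 0 < ε → ∃ D : ℝ, 0 ≤ D ∧ ∀ n : ℕ,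
      -((v / 2 + ε) * n ^ 2) - D ≤ ∑ k ∈ Finset.range n, x (k + 1)) :
    Tendsto (fun n : ℕ => x n / n) atTop (nhds (-v)) := by
  have key : ∀ ε : ℝ, 0 < ε → ∀ᶠ n : ℕ in atTop, -v - ε < x n / n ∧ x n / n < -v + ε := by
    intro ε hε
    -- `η` is chosen so that `v η / 2 ≤ ε / 4`
    set η : ℝ := min 1 (ε / (2 * (v + 1))) with hη
    have hη0 : 0 < η := by positivity
    have hη1 : η ≤ 1 := min_le_left _ _
    have hηv : v * η / 2 ≤ ε / 4 := by
      have h1 : η ≤ ε / (2 * (v + 1)) := min_le_right _ _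
      rw [le_div_iff₀ (by positivity)] at h1
      nlinarith
    set τ : ℝ := η * ε / 20 with hτ
    have hτ0 : 0 < τ := by positivity
    obtain ⟨D₁, hD₁, hU₁⟩ := hU τ hτ0
    obtain ⟨D₂, hD₂, hL₂⟩ := hL τ hτ0
    obtain ⟨D₃, hD₃, hU₃⟩ := hU (ε / 2) (by positivity)
    have hev : ∀ B : ℝ, ∀ᶠ n : ℕ in atTop, B < ε / 4 * n := by
      intro B
      exact (tendsto_natCast_atTop_atTop.const_mul_atTop (by positivity : 0 < ε / 4)).eventually
        (eventually_gt_atTop B)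
    filter_upwards [hev (v / 2 + (D₁ + D₂) / η), hev D₃, eventually_ge_atTop 1] with n h1 h3 hn
    have hn1 : (1 : ℝ) ≤ n := by exact_mod_cast hn
    have hn0 : (0 : ℝ) < n := by linarith
    constructor
    · rw [lt_div_iff₀ hn0]
      set m : ℕ := ⌈η * n⌉₊ with hm
      have hm1 : η * n ≤ m := Nat.le_ceil _
      have hm2 : (m : ℝ) < η * n + 1 := Nat.ceil_lt_add_one (by positivity)
      have hm3 : (m : ℝ) ≤ n := by
        have : m ≤ n := Nat.ceil_le.2 (by nlinarith)
        exact_mod_cast this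
      have hm0 : (0 : ℝ) < m := lt_of_lt_of_le (by positivity) hm1
      have hS : ∑ k ∈ Finset.range (n + m), x (k + 1) ≤
          (∑ k ∈ Finset.range n, x (k + 1)) + m * x n := by
        rw [Finset.sum_range_add]
        gcongr
        calc ∑ i ∈ Finset.range m, x (n + i + 1) ≤ ∑ _i ∈ Finset.range m, x n :=
              Finset.sum_le_sum fun i _ => hanti _ _ hn (by omega)
          _ = m * x n := by simp
      have hS2 : ∑ k ∈ Finset.range n, x (k + 1) ≤ n * D₁ - (v - τ) * (n * (n + 1) / 2) := by
        have hg : ∀ j : ℕ, ∑ k ∈ Finset.range j, x (k + 1) ≤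
            j * D₁ - (v - τ) * (j * (j + 1) / 2) := by
          intro j
          induction j with
          | zero => simp
          | succ j ih =>
            rw [Finset.sum_range_succ]
            have := hU₁ (j + 1) (by omega)
            push_cast at this ⊢
            linarith
        exact hg n
      have hL' := hL₂ (n + m)
      push_cast at hL'
      have hmain : -(v * n * m) - v * m ^ 2 / 2 - 5 * τ * n ^ 2 - D₂ - n * D₁ ≤ m * x n := by
        have e1 : τ * ((n : ℝ) + m) ^ 2 ≤ τ * (4 * n ^ 2) := by gcongr; nlinarith
        have e2 : τ * ((n : ℝ) * (n + 1) / 2) ≤ τ * n ^ 2 := by gcongr; nlinarith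
        have e3 : 0 ≤ v * n := by positivity
        linarith
      -- the error terms are at most `m` times the quantity bounded by `h1`
      have e4 : 5 * τ * n ^ 2 + D₂ + n * D₁ ≤ m * (ε / 4 * n + (D₁ + D₂) / η) := by
        have : η * n * (ε / 4 * n + (D₁ + D₂) / η) ≤ m * (ε / 4 * n + (D₁ + D₂) / η) := by
          gcongr
        refine le_trans ?_ this
        have e5 : η * n * (ε / 4 * n + (D₁ + D₂) / η) = 5 * τ * n ^ 2 + n * (D₁ + D₂) := by
          rw [hτ]; field_simp; ring
        rw [e5]
        nlinarith
      have e6 : v * m ^ 2 / 2 ≤ m * (v * (η * n + 1) / 2) := by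
        have : v * (m : ℝ) ≤ v * (η * n + 1) := by gcongr
        nlinarith
      have e7 : (m : ℝ) * (-(v * n) - v * (η * n + 1) / 2 - (ε / 4 * n + (D₁ + D₂) / η)) ≤
          m * x n := by linarith
      have e8 := le_of_mul_le_mul_left e7 hm0
      have e9 : v * η / 2 * n ≤ ε / 4 * n := by gcongr
      linarith
    · rw [div_lt_iff₀ hn0]
      have := hU₃ n hn
      nlinarith
  rw [Metric.tendsto_nhds]
  intro ε hε
  filter_upwards [key ε hε] with n hn
  rw [Real.dist_eq, abs_lt]
  constructor <;> linarith [hn.1, hn.2]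

/-- Logarithms are absorbed by linear terms. -/
lemma exists_log_le (ε : ℝ) (hε : 0 < ε) :
    ∃ D : ℝ, 0 ≤ D ∧ ∀ n : ℕ, 1 ≤ n → Real.log n ≤ ε * n + D := by
  refine ⟨|Real.log ε|, abs_nonneg _, fun n hn => ?_⟩
  have hn0 : (0 : ℝ) < n := by exact_mod_cast hn
  have h1 := Real.log_le_sub_one_of_pos (mul_pos hε hn0)
  rw [Real.log_mul hε.ne' hn0.ne'] at h1
  linarith [neg_abs_le (Real.log ε)]

/-- The upper bounds for `a n` and the lower bounds for `a 1 ⋯ a n` together determine the limit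
of `(a n)^(1/n)`. -/
lemma tendsto_rpow_inv_of_bounds {a : ℕ → ℝ} {v : ℝ} (hv : 0 ≤ v) (ha : ∀ n, 0 ≤ a n)
    (hanti : ∀ m n : ℕ, 1 ≤ m → m ≤ n → a n ≤ a m)
    (hU : ∀ ε : ℝ, 0 < ε → ∃ C : ℝ, 0 < C ∧ ∀ n : ℕ, 2 ≤ n →
      a n ≤ C * n * Real.exp (-(n * (v - ε))))
    (hL : ∀ b : ℝ, v < b → ∃ C : ℝ, 0 < C ∧ ∀ n : ℕ,
      Real.exp (-(b * n ^ 2 / 2)) ≤ (C * n ^ 2) ^ n * ∏ k : Fin n, a (k + 1)) :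
    Tendsto (fun n : ℕ => a n ^ ((n : ℝ)⁻¹)) atTop (nhds (Real.exp (-v))) := by
  have hpos : ∀ n : ℕ, 1 ≤ n → 0 < a n := by
    intro n hn
    refine (ha n).lt_of_ne fun h0 => ?_
    obtain ⟨C, -, hC⟩ := hL (v + 1) (by linarith)
    have h1 := hC n
    have h2 : ∏ k : Fin n, a (k + 1) = 0 := by
      refine Finset.prod_eq_zero (Finset.mem_univ ⟨n - 1, by omega⟩) ?_
      simp only [Nat.sub_add_cancel hn]
      exact h0.symm
    rw [h2, mul_zero] at h1
    exact absurd h1 (not_le.2 (Real.exp_pos _))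
  have hlim : Tendsto (fun n : ℕ => Real.log (a n) / n) atTop (nhds (-v)) := by
    refine tendsto_div_of_sum_bounds hv
      (fun m n hm hmn => Real.log_le_log (hpos n (hm.trans hmn)) (hanti m n hm hmn)) ?_ ?_
    · intro ε hε
      obtain ⟨C, hC0, hC⟩ := hU (ε / 2) (by positivity)
      obtain ⟨D, hD0, hD⟩ := exists_log_le (ε / 2) (by positivity)
      refine ⟨|Real.log C| + D + |Real.log (a 1)| + v, by positivity, fun n hn => ?_⟩
      rcases hn.eq_or_lt with rfl | hn2
      · have := le_abs_self (Real.log (a 1))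
        have := abs_nonneg (Real.log C)
        push_cast
        linarith
      · have hn0 : (0 : ℝ) < n := by exact_mod_cast hn
        have h1 := Real.log_le_log (hpos n hn) (hC n hn2)
        rw [Real.log_mul (by positivity) (Real.exp_pos _).ne', Real.log_mul hC0.ne' hn0.ne',
          Real.log_exp] at h1
        have := hD n hn
        have := le_abs_self (Real.log C)
        have := abs_nonneg (Real.log (a 1))
        linarith
    · intro ε hε
      obtain ⟨C, hC0, hC⟩ := hL (v + ε) (by linarith)
      obtain ⟨D, hD0, hD⟩ := exists_log_le (ε / 8) (by positivity)
      set B := |Real.log C| + 2 * D with hB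
      have hB0 : 0 ≤ B := by positivity
      refine ⟨B ^ 2 / ε, by positivity, fun n => ?_⟩
      rcases Nat.eq_zero_or_pos n with rfl | hn
      · simp only [CharP.cast_eq_zero, Finset.range_zero, Finset.sum_empty]
        have : 0 ≤ B ^ 2 / ε := by positivity
        linarith
      have hn0 : (0 : ℝ) < n := by exact_mod_cast hn
      have hprod : 0 < ∏ k : Fin n, a (k + 1) :=
        Finset.prod_pos fun k _ => hpos _ (by omega)
      have h1 := Real.log_le_log (Real.exp_pos _) (hC n)
      rw [Real.log_exp, Real.log_mul (by positivity) hprod.ne', Real.log_pow,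
        Real.log_mul hC0.ne' (by positivity), Real.log_pow,
        Real.log_prod (fun k _ => (hpos _ (by omega)).ne'),
        Fin.sum_univ_eq_sum_range (fun k => Real.log (a (k + 1)))] at h1
      have h2 : (n : ℝ) * (Real.log C + (2 : ℕ) * Real.log n) ≤ n * (B + ε / 4 * n) := by
        refine mul_le_mul_of_nonneg_left ?_ hn0.le
        have := hD n hn
        have := le_abs_self (Real.log C)
        push_cast
        linarith
      have h3 : n * B ≤ ε / 4 * n ^ 2 + B ^ 2 / ε := by
        have h4 : 0 ≤ (ε / 2 * n - B) ^ 2 / ε := by positivity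
        have h5 : (ε / 2 * n - B) ^ 2 / ε = ε / 4 * n ^ 2 + B ^ 2 / ε - n * B := by
          field_simp; ring
        linarith
      linarith
  refine ((Real.continuous_exp.tendsto _).comp hlim).congr' ?_
  filter_upwards [eventually_ge_atTop 1] with n hn
  rw [Function.comp_apply, Real.rpow_def_of_pos (hpos n hn), div_eq_mul_inv]

/-- A single point carries no measure of finite energy. -/
lemma greenV_singleton (c : ℂ) : greenV {c} = ⊤ := by
  simp only [greenV, iInf_eq_top]
  intro μ hμ ⟨K, hK, hKc, hμK⟩
  have hae : ∀ᵐ z ∂μ, z = c := by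
    filter_upwards [measure_eq_zero_iff_ae_notMem.1 hμK] with z hz
    exact hK (not_not.1 hz)
  have h1 : ∀ z, z = c → ∫⁻ w, greenFnE z w ∂μ = ⊤ := by
    rintro z rfl
    have : ∫⁻ w, greenFnE z w ∂μ = ∫⁻ _w, ⊤ ∂μ := by
      refine lintegral_congr_ae ?_
      filter_upwards [hae] with w hw
      rw [hw, greenFnE_self]
    rw [this, lintegral_const, measure_univ, mul_one]
  unfold greenEnergy
  have : ∫⁻ z, ∫⁻ w, greenFnE z w ∂μ ∂μ = ∫⁻ _z, ⊤ ∂μ :=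
    lintegral_congr_ae (hae.mono h1)
  rw [this, lintegral_const, measure_univ, mul_one]

/-- A composition operator with constant symbol has rank at most one. -/
lemma approxNumber_eq_zero_of_const
    {p : ℝ} (hp : 1 ≤ p)
    {X : Type} [NormedAddCommGroup X] [NormedSpace ℂ X]
    (ι : X →ₗ[ℂ] (ℂ → ℂ))
    (hι_surj : ∀ f : ℂ → ℂ, memHp p f → ∃ g : X, ∀ z ∈ unitDisk, ι g z = f z)
    (hι_inj : ∀ g : X, (∀ z ∈ unitDisk, ι g z = 0) → g = 0)
    {φ : ℂ → ℂ} {c : ℂ} (hφ : ∀ z ∈ unitDisk, φ z = c)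
    (Cφ : X →L[ℂ] X)
    (hCφ : ∀ g : X, ∀ z ∈ unitDisk, ι (Cφ g) z = ι g (φ z)) {n : ℕ} (hn : 2 ≤ n) :
    approxNumber Cφ n = 0 := by
  obtain ⟨e, he⟩ := hι_surj (fun _ => 1)
    (memHp_of_bounded (M := 1) hp (differentiableOn_const _) (by simp))
  have hval : ∀ g, Cφ g = ι g c • e := by
    intro g
    rw [← sub_eq_zero]
    refine hι_inj _ fun z hz => ?_
    simp [hCφ g z hz, hφ z hz, he z hz]
  refine le_antisymm ?_ (approxNumber_nonneg _ _)
  have hrank : Module.rank ℂ (LinearMap.range (Cφ : X →ₗ[ℂ] X)) < (n : Cardinal) := by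
    have hle : LinearMap.range (Cφ : X →ₗ[ℂ] X) ≤ Submodule.span ℂ {e} := by
      rintro _ ⟨g, rfl⟩
      exact Submodule.mem_span_singleton.2 ⟨ι g c, (hval g).symm⟩
    refine (Submodule.rank_mono hle).trans_lt ((rank_span_le _).trans_lt ?_)
    rw [Cardinal.mk_singleton]
    exact_mod_cast hn
  simpa using approxNumber_le Cφ Cφ n hrank

/-- For `1 ≤ p < ∞` and an analytic self-map `φ` of the unit disk with
`closure (φ(D)) ⊆ D`, the approximation numbers of `C_φ` on `H^p` satisfy
`lim aₙ(C_φ)^{1/n} = e^{-1/capa(φ(D))}`. -/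
theorem beta_eq_expNegV_Hp
    (p : ℝ) (hp : 1 ≤ p)
    (X : Type) [NormedAddCommGroup X] [NormedSpace ℂ X] [CompleteSpace X]
    (ι : X →ₗ[ℂ] (ℂ → ℂ))
    (hι_mem : ∀ g : X, memHp p (ι g))
    (hι_norm : ∀ g : X, ‖g‖ = hpNorm p (ι g))
    (hι_surj : ∀ f : ℂ → ℂ, memHp p f → ∃ g : X, ∀ z ∈ unitDisk, ι g z = f z)
    (hι_inj : ∀ g : X, (∀ z ∈ unitDisk, ι g z = 0) → g = 0)
    (φ : ℂ → ℂ)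
    (hφ_diff : DifferentiableOn ℂ φ unitDisk)
    (hφ_maps : Set.MapsTo φ unitDisk unitDisk)
    (hφ_clos : closure (φ '' unitDisk) ⊆ unitDisk)
    (Cφ : X →L[ℂ] X)
    (hCφ : ∀ g : X, ∀ z ∈ unitDisk, ι (Cφ g) z = ι g (φ z)) :
    Filter.Tendsto (fun n : ℕ => approxNumber Cφ n ^ ((n : ℝ)⁻¹)) Filter.atTop
      (nhds (expNegV (φ '' unitDisk))) := by
  have h0D : (0 : ℂ) ∈ unitDisk := by simp [unitDisk]
  have hconn : IsPreconnected unitDisk := by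
    rw [unitDisk_eq_ball]; exact (convex_ball _ _).isPreconnected
  by_cases hconst : ∀ z ∈ unitDisk, φ z = φ 0
  · have him : φ '' unitDisk = {φ 0} := by
      ext w
      constructor
      · rintro ⟨z, hz, rfl⟩
        exact hconst z hz
      · rintro rfl
        exact ⟨0, h0D, rfl⟩
    rw [him, expNegV, if_pos (greenV_singleton _)]
    refine tendsto_const_nhds.congr' ?_
    filter_upwards [eventually_ge_atTop 2] with n hn
    rw [approxNumber_eq_zero_of_const hp ι hι_surj hι_inj hconst Cφ hCφ hn, Real.zero_rpow]
    have : (n : ℝ) ≠ 0 := by exact_mod_cast (by omega : n ≠ 0)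
    exact inv_ne_zero this
  · push Not at hconst
    obtain ⟨z₁, hz₁, hφz₁⟩ := hconst
    have hφ_open : ∀ s ⊆ unitDisk, IsOpen s → IsOpen (φ '' s) := by
      rcases (hφ_diff.analyticOnNhd isOpen_unitDisk).is_constant_or_isOpen hconn with ⟨w, hw⟩ | h
      · exact absurd ((hw z₁ hz₁).trans (hw 0 h0D).symm) hφz₁
      · exact h
    obtain ⟨hV, hU⟩ := exists_approxNumber_le hp ι hι_mem hι_norm hι_surj hφ_diff hφ_clos hφ_open
      hz₁ hφz₁ Cφ hCφ
    rw [expNegV, if_neg hV]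
    refine tendsto_rpow_inv_of_bounds ENNReal.toReal_nonneg (approxNumber_nonneg Cφ)
      (fun m n hm hmn => approxNumber_anti Cφ hm hmn) hU fun b hb => ?_
    exact exp_le_prod_approxNumber hp ι hι_mem hι_norm hι_surj hφ_maps hφ_open Cφ hCφ
      ((ENNReal.lt_ofReal_iff_toReal_lt hV).2 hb)


end
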